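/- Let R be a commutative ring. The assignments sending a compactly generated localizing subcategory Loc(S) of D(R) to the union of the Zariski closed sets V(I) over all finitely generated ideals I with R/I ∈ Loc(S), and sending a Hochster open set U ⊆ Spec R to Loc({K(I) : I a finitely generated ideal with V(I) ⊆ U}), are mutually inverse, inclusion-preserving bijections between the set of compactly generated localizing subcategories of D(R) and the set of Hochster open subsets of Spec R. -/

import Mathlib

open CategoryTheory CategoryTheory.Limits CategoryTheory.Pretriangulated ZeroObject

universe w w' v u

section TriangulatedDefs

variable {T : Type u} [Category.{v} T] [Preadditive T] [HasZeroObject T]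
  [HasShift T ℤ] [∀ n : ℤ, (shiftFunctor T n).Additive] [Pretriangulated T]

/-- A localizing subcategory of a (pre)triangulated category, encoded as a set of
objects: it is closed under isomorphisms, contains the zero object, is stable
under shifts, closed under cones of distinguished triangles (hence a full
triangulated subcategory), and closed under arbitrary small coproducts
(phrased via colimit cofans, so that no global existence of coproducts
is needed). -/
structure IsLocalizingSub (S : Set T) : Prop where
  zero_mem : (0 : T) ∈ S
  mem_of_iso : ∀ {x y : T}, (x ≅ y) → x ∈ S → y ∈ S
  shift_mem : ∀ (n : ℤ) {x : T}, x ∈ S → x⟦n⟧ ∈ S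
  cone_mem : ∀ (Tr : Triangle T), Tr ∈ distinguishedTriangles →
    Tr.obj₁ ∈ S → Tr.obj₂ ∈ S → Tr.obj₃ ∈ S
  coprod_mem : ∀ {ι : Type w} (f : ι → T) (c : Cofan f), IsColimit c →
    (∀ i, f i ∈ S) → c.pt ∈ S

/-- A colocalizing subcategory: as `IsLocalizingSub` but with products instead
of coproducts. -/
structure IsColocalizingSub (S : Set T) : Prop where
  zero_mem : (0 : T) ∈ S
  mem_of_iso : ∀ {x y : T}, (x ≅ y) → x ∈ S → y ∈ S
  shift_mem : ∀ (n : ℤ) {x : T}, x ∈ S → x⟦n⟧ ∈ S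
  cone_mem : ∀ (Tr : Triangle T), Tr ∈ distinguishedTriangles →
    Tr.obj₁ ∈ S → Tr.obj₂ ∈ S → Tr.obj₃ ∈ S
  prod_mem : ∀ {ι : Type w} (f : ι → T) (c : Fan f), IsLimit c →
    (∀ i, f i ∈ S) → c.pt ∈ S

/-- `Loc S`: the smallest localizing subcategory containing the set of
objects `S` (the intersection of all localizing subcategories containing it). -/
def Loc (S : Set T) : Set T :=
  ⋂₀ {L : Set T | IsLocalizingSub.{w} L ∧ S ⊆ L}

/-- The right orthogonal of a set of objects. -/
def rightOrth (C : Set T) : Set T :=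
  {x : T | ∀ ⦃c : T⦄, c ∈ C → ∀ (g : c ⟶ x), g = 0}

end TriangulatedDefs

section CompactDefs

variable {T : Type u} [Category.{v} T] [Preadditive T]

/-- The canonical comparison map `⨁ᵢ Hom(x, fᵢ) →+ Hom(x, ∐ f)` associated to a
cofan `c` on a family `f`. -/
noncomputable def cofanHomComparison {ι : Type w} (x : T) (f : ι → T) (c : Cofan f) :
    (Π₀ i, (x ⟶ f i)) →+ (x ⟶ c.pt) :=
  letI := Classical.decEq ι
  DFinsupp.sumAddHom (fun i => AddMonoidHom.mk' (fun φ => φ ≫ c.inj i)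
    (fun φ ψ => Preadditive.add_comp _ _ _ φ ψ (c.inj i)))

/-- An object `x` is compact if `Hom(x, -)` commutes with arbitrary small
coproducts, i.e. for every colimit cofan on a family `f`, the canonical map
`⨁ᵢ Hom(x, fᵢ) → Hom(x, ∐ f)` is bijective. -/
def IsCompactObj (x : T) : Prop :=
  ∀ ⦃ι : Type w⦄ (f : ι → T) (c : Cofan f), IsColimit c →
    Function.Bijective (cofanHomComparison x f c)

end CompactDefs

section DR

variable (R : Type u) [CommRing R] [HasDerivedCategory.{w'} (ModuleCat.{u} R)]

/-- The `R`-module `M`, regarded as an object of the derived category `D(R)`,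
as a complex concentrated in degree `0`. -/
noncomputable def smod (M : ModuleCat.{u} R) : DerivedCategory (ModuleCat.{u} R) :=
  (DerivedCategory.singleFunctor (ModuleCat.{u} R) 0).obj M

end DR
section Statement0

variable (R : Type u) [CommRing R] [HasDerivedCategory.{w'} (ModuleCat.{u} R)]

/-- The Koszul complex `K(f₁) ⊗ ⋯ ⊗ K(fₙ)` of a finite list of elements of `R`,
realized inductively via iterated mapping cones: tensoring a complex `K` with the
two-term Koszul complex `K(f) = (R →f R)` is the mapping cone of multiplication
by `f` on `K`.  (For the empty list this is `R` in degree `0`.) -/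
noncomputable def koszulCx : List R → CochainComplex (ModuleCat.{u} R) ℤ
  | [] => (CochainComplex.singleFunctor (ModuleCat.{u} R) 0).obj (ModuleCat.of R R)
  | f :: l => CochainComplex.mappingCone (f • 𝟙 (koszulCx l))

/-- The Koszul complex of a list of elements, as an object of `D(R)`. -/
noncomputable def koszulD (l : List R) : DerivedCategory (ModuleCat.{u} R) :=
  DerivedCategory.Q.obj (koszulCx R l)

/-- A compactly generated localizing subcategory of `D(R)`: one of the form
`Loc S` for a set `S` of compact objects. -/
def IsCGLoc (L : Set (DerivedCategory (ModuleCat.{u} R))) : Prop :=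
  ∃ S : Set (DerivedCategory (ModuleCat.{u} R)),
    (∀ x ∈ S, IsCompactObj.{u} x) ∧ L = Loc.{u} S

/-- A Hochster open subset of `Spec R`: a union of Zariski closed sets `V(I)`
with `I` finitely generated. -/
def IsHochsterOpen (U : Set (PrimeSpectrum R)) : Prop :=
  ∃ 𝒮 : Set (Ideal R), (∀ I ∈ 𝒮, I.FG) ∧
    U = ⋃ I ∈ 𝒮, PrimeSpectrum.zeroLocus (I : Set R)

/-- The map sending a localizing subcategory `L` to the union of the Zariski
closed sets `V(I)` over all finitely generated ideals `I` with `R/I ∈ L`. -/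
def locToHochster (L : Set (DerivedCategory (ModuleCat.{u} R))) :
    Set (PrimeSpectrum R) :=
  ⋃ I ∈ {I : Ideal R | I.FG ∧ smod R (ModuleCat.of R (R ⧸ I)) ∈ L},
    PrimeSpectrum.zeroLocus (I : Set R)

/-- The map sending a Hochster open set `U` to the localizing subcategory
generated by the Koszul complexes `K(I)` of the finitely generated ideals `I`
(given by finite lists of generators) with `V(I) ⊆ U`. -/
def hochsterToLoc (U : Set (PrimeSpectrum R)) :
    Set (DerivedCategory (ModuleCat.{u} R)) :=
  Loc.{u} {x | ∃ l : List R,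
    PrimeSpectrum.zeroLocus ((Ideal.span {r | r ∈ l} : Ideal R) : Set R) ⊆ U ∧
    x = koszulD R l}

end Statement0

/-!
Let `L` be a localizing subcategory. The ideals containing a finitely generated `J` with `R/J ∈ L`
form a Gabriel filter, whose maximal nonmembers are prime. If `I` is finitely generated and `V(I)`
lies in the open set of `L`, then no prime containing `I` is a nonmember, hence `R/I ∈ L` and
`K(I) ∈ L`.

Conversely, a compact object of `L` is a retract of a bounded complex `K` of finite free modules
which lies in `L`. The annihilator of `id_K` in `D(R)` belongs to the filter: otherwise it is
contained in a maximal nonmember `p`, with residue field `κ(p)`.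
* If `K ⊗ κ(p)` is acyclic, clearing denominators in a contraction gives a null-homotopic
  endomorphism of `K` whose determinants are not in `p`, and by Cayley–Hamilton their product is an
  element outside `p` which annihilates `id_K`.
* Otherwise there are a chain `z` and a functional `φ` on `K` which are a cycle and a cocycle modulo
  some finitely generated `E ≤ p`, with `φ(z) ∉ p`. By maximality of `p`, after enlarging `E` inside
  `p` the ideal `E + (φ(z))` contains a finitely generated `J` with `R/J ∈ L`, so that the cone of
  `φ(z)` on `R/E` is in `L`. Since multiplication by `φ(z)` on `R/E` factors through
  `K ⊗ R/E ∈ L`, also `R/E ∈ L`, and `p` is in the filter.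

So `id_K` is annihilated by a finitely generated `J` with `R/J ∈ L`, and `K` is in the localizing
subcategory generated by `K(J)`.

Finally, if `q ∉ U`, the left orthogonal of the objects on which `R ∖ q` acts invertibly contains
all `K(I)` with `V(I) ⊆ U`, but no `R/I` with `I ≤ q`, because of the nonzero map `R/I ⟶ κ(q)`.
-/

section Localizing

variable {T : Type u} [Category.{v} T] [Preadditive T] [HasZeroObject T]
  [HasShift T ℤ] [∀ n : ℤ, (shiftFunctor T n).Additive] [Pretriangulated T]

theorem isLocalizingSub_loc (S : Set T) : IsLocalizingSub.{w} (Loc.{w} S) where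
  zero_mem _ hL := hL.1.zero_mem
  mem_of_iso e hx L hL := hL.1.mem_of_iso e (hx L hL)
  shift_mem n _ hx L hL := hL.1.shift_mem n (hx L hL)
  cone_mem Tr hTr h₁ h₂ L hL := hL.1.cone_mem Tr hTr (h₁ L hL) (h₂ L hL)
  coprod_mem f c hc hf L hL := hL.1.coprod_mem f c hc fun i ↦ hf i L hL

theorem subset_loc (S : Set T) : S ⊆ Loc.{w} S :=
  Set.subset_sInter fun _ hL ↦ hL.2

theorem IsLocalizingSub.loc_subset {S L : Set T} (hL : IsLocalizingSub.{w} L) (h : S ⊆ L) :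
    Loc.{w} S ⊆ L :=
  Set.sInter_subset_of_mem ⟨hL, h⟩

/-- A localizing subcategory, seen as a property of objects, so that the Verdier quotient of
`ObjectProperty.trW` is available. -/
def IsLocalizingSub.toObjectProperty {L : Set T} (_ : IsLocalizingSub.{w} L) : ObjectProperty T :=
  fun X ↦ X ∈ L

section

variable {L : Set T} (hL : IsLocalizingSub.{w} L)

instance : hL.toObjectProperty.IsClosedUnderIsomorphisms where
  of_iso e h := hL.mem_of_iso e h

instance : hL.toObjectProperty.IsTriangulated where
  exists_zero := ⟨0, isZero_zero T, hL.zero_mem⟩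
  isStableUnderShiftBy n := ⟨fun _ hX ↦ hL.shift_mem n hX⟩
  toIsTriangulatedClosed₂ := .mk' fun _ hTr h₁ h₃ ↦
    hL.cone_mem _ (inv_rot_of_distTriang _ hTr) (hL.shift_mem (-1) h₃) h₁

instance (ι : Type*) [Small.{w} ι] :
    hL.toObjectProperty.IsClosedUnderColimitsOfShape (Discrete ι) := by
  have : hL.toObjectProperty.IsClosedUnderColimitsOfShape (Discrete (Shrink.{w} ι)) := by
    refine ⟨fun X hX ↦ ?_⟩
    obtain ⟨⟨F, c, hc⟩, hF⟩ := hX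
    exact hL.coprod_mem (fun i ↦ F.obj ⟨i⟩) (Cofan.mk X fun i ↦ c.app ⟨i⟩)
      ((IsColimit.precomposeHomEquiv Discrete.natIsoFunctor.symm _).symm hc |>.ofIsoColimit
        (Cocone.ext (Iso.refl _))) fun i ↦ hF ⟨i⟩
  exact .of_equivalence (Discrete.equivalence (equivShrink ι).symm)

end

end Localizing

/-- The Eilenberg swindle: push the copies of `X` inside `∐ Y` one step to the right to make room
for another one. -/
theorem nonempty_sigma_biprod_iso_of_retract {C : Type u} [Category.{v} C] [Preadditive C]
    [HasBinaryBiproducts C] [HasCoproductsOfShape ℕ C] {X Y : C} (h : Retract X Y) :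
    Nonempty ((∐ fun _ : ℕ ↦ Y) ⊞ X ≅ ∐ fun _ : ℕ ↦ Y) := by
  let W := ∐ fun _ : ℕ ↦ Y
  let ι (n : ℕ) : Y ⟶ W := Sigma.ι (fun _ : ℕ ↦ Y) n
  let e : Y ⟶ Y := h.r ≫ h.i
  let push : W ⟶ W := Sigma.desc fun n ↦ (𝟙 Y - e) ≫ ι n + e ≫ ι (n + 1)
  let pull : W ⟶ W :=
    Sigma.desc fun | 0 => (𝟙 Y - e) ≫ ι 0 | n + 1 => (𝟙 Y - e) ≫ ι (n + 1) + e ≫ ι n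
  let first : W ⟶ X := Sigma.desc fun | 0 => h.r | _ + 1 => 0
  have ι_push (n : ℕ) : ι n ≫ push = (𝟙 Y - e) ≫ ι n + e ≫ ι (n + 1) := Sigma.ι_desc _ _
  have ι_pull_zero : ι 0 ≫ pull = (𝟙 Y - e) ≫ ι 0 := Sigma.ι_desc _ _
  have ι_pull_succ (n : ℕ) : ι (n + 1) ≫ pull = (𝟙 Y - e) ≫ ι (n + 1) + e ≫ ι n :=
    Sigma.ι_desc _ _
  have ι_first_zero : ι 0 ≫ first = h.r := Sigma.ι_desc _ _
  have ι_first_succ (n : ℕ) : ι (n + 1) ≫ first = 0 := Sigma.ι_desc _ _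
  have i_e {Z : C} (a : Y ⟶ Z) : h.i ≫ e ≫ a = h.i ≫ a := by simp [e]
  have e_r : e ≫ h.r = h.r := by simp [e]
  have e_e {Z : C} (a : Y ⟶ Z) : e ≫ e ≫ a = e ≫ a := by simp [e]
  have push_pull : push ≫ pull = 𝟙 W := Sigma.hom_ext _ _ fun n ↦ by
    change ι n ≫ push ≫ pull = ι n ≫ 𝟙 W
    rw [reassoc_of% ι_push]
    cases n <;> simp [ι_pull_zero, ι_pull_succ, e_e]
  have push_first : push ≫ first = 0 := Sigma.hom_ext _ _ fun n ↦ by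
    change ι n ≫ push ≫ first = ι n ≫ 0
    rw [reassoc_of% ι_push]
    cases n <;> simp [ι_first_zero, ι_first_succ, e_r]
  have pull_push : pull ≫ push + first ≫ h.i ≫ ι 0 = 𝟙 W := Sigma.hom_ext _ _ fun n ↦ by
    change ι n ≫ (pull ≫ push + first ≫ h.i ≫ ι 0) = ι n ≫ 𝟙 W
    cases n with
    | zero => simp [reassoc_of% ι_pull_zero, reassoc_of% ι_first_zero, ι_push, e]
    | succ n => simp [reassoc_of% ι_pull_succ, reassoc_of% ι_first_succ, ι_push, e_e]
  exact ⟨{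
    hom := biprod.desc push (h.i ≫ ι 0)
    inv := biprod.lift pull first
    hom_inv_id := by
      refine biprod.hom_ext' _ _ (biprod.hom_ext _ _ ?_ ?_) (biprod.hom_ext _ _ ?_ ?_)
      · simpa using push_pull
      · simpa using push_first
      · simp [ι_pull_zero, i_e]
      · simp [ι_first_zero]
    inv_hom_id := by rw [biprod.lift_desc, pull_push] }⟩

section Verdier

open scoped CategoryTheory.Pretriangulated.Opposite

variable {T : Type u} [Category.{v} T] [Preadditive T] [HasZeroObject T]
  [HasShift T ℤ] [∀ n : ℤ, (shiftFunctor T n).Additive] [Pretriangulated T]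

theorem isLocalizingSub_setOf (P : ObjectProperty T) [P.IsTriangulated]
    [P.IsClosedUnderIsomorphisms] [∀ ι : Type w, P.IsClosedUnderColimitsOfShape (Discrete ι)] :
    IsLocalizingSub.{w} {X | P X} where
  zero_mem := P.prop_zero
  mem_of_iso e h := P.prop_of_iso e h
  shift_mem n _ h := P.le_shift n _ h
  cone_mem Tr hTr h₁ h₂ := P.ext_of_isTriangulatedClosed₃ Tr hTr h₁ h₂
  coprod_mem _ _ hc hf := P.prop_of_isColimit hc fun i ↦ hf i.as

instance (P : ObjectProperty T) [P.IsTriangulated] [P.IsClosedUnderIsomorphisms]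
    [HasCoproductsOfShape ℕ T] [P.IsClosedUnderColimitsOfShape (Discrete ℕ)] :
    P.IsStableUnderRetracts where
  of_retract {X Y} h hY := by
    obtain ⟨swindle⟩ := nonempty_sigma_biprod_iso_of_retract h
    have hW : P (∐ fun _ : ℕ ↦ Y) := P.prop_colimit _ fun _ ↦ hY
    exact P.ext_of_isTriangulatedClosed₃ _ (binaryBiproductTriangle_distinguished _ X) hW
      (P.prop_of_iso swindle.symm hW)

variable [IsTriangulated T]

theorem trW_map_Q_eq_zero_iff (P : ObjectProperty T) [P.IsTriangulated] {X Y : T} (f : X ⟶ Y) :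
    P.trW.Q.map f = 0 ↔ ∃ (Z : T) (a : X ⟶ Z) (b : Z ⟶ Y), P Z ∧ a ≫ b = f := by
  constructor
  · intro hf
    rw [← Functor.map_zero, MorphismProperty.map_eq_iff_precomp P.trW.Q P.trW] at hf
    obtain ⟨W, s, ⟨Z, a, _, hs, hZ⟩, hsf⟩ := hf
    obtain ⟨b, hb⟩ := Triangle.yoneda_exact₂ _ hs f (hsf.trans comp_zero)
    exact ⟨Z, a, b, hZ, hb.symm⟩
  · rintro ⟨Z, a, b, hZ, rfl⟩
    have : IsIso (P.trW.Q.map (0 : (0 : T) ⟶ Z)) :=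
      Localization.inverts P.trW.Q P.trW _ ⟨Z, 𝟙 Z, 0, contractible_distinguished₁ Z, hZ⟩
    have hQZ : IsZero (P.trW.Q.obj Z) :=
      (P.trW.Q.map_isZero (isZero_zero T)).of_iso (asIso (P.trW.Q.map (0 : (0 : T) ⟶ Z))).symm
    rw [Functor.map_comp, hQZ.eq_of_tgt (P.trW.Q.map a) 0, zero_comp]

theorem isZero_trW_Q_obj_iff (P : ObjectProperty T) [P.IsTriangulated] [P.IsStableUnderRetracts]
    (X : T) : IsZero (P.trW.Q.obj X) ↔ P X := by
  rw [IsZero.iff_id_eq_zero, ← P.trW.Q.map_id, trW_map_Q_eq_zero_iff]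
  exact ⟨fun ⟨Z, a, b, hZ, hab⟩ ↦ P.prop_of_retract ⟨a, b, hab⟩ hZ,
    fun hX ↦ ⟨X, 𝟙 X, 𝟙 X, hX, Category.comp_id _⟩⟩

theorem trW_eq_inverseImage_isomorphisms (P : ObjectProperty T) [P.IsTriangulated]
    [P.IsStableUnderRetracts] :
    P.trW = (MorphismProperty.isomorphisms P.trW.Localization).inverseImage P.trW.Q := by
  ext X Y f
  obtain ⟨Z, g, h, hfgh⟩ := distinguished_cocone_triangle f
  exact (P.trW_iff_of_distinguished _ hfgh).trans <| (isZero_trW_Q_obj_iff P Z).symm.trans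
    (Triangle.isZero₃_iff_isIso₁ _ (P.trW.Q.map_distinguished _ hfgh))

instance (P : ObjectProperty T) [P.IsTriangulated] [P.IsStableUnderRetracts] :
    P.trW.HasTwoOutOfThreeProperty := by
  rw [trW_eq_inverseImage_isomorphisms]
  infer_instance

instance (P : ObjectProperty T) [P.IsTriangulated] (ι : Type*)
    [HasCoproductsOfShape ι T] [P.IsClosedUnderIsomorphisms]
    [P.IsClosedUnderColimitsOfShape (Discrete ι)] : P.trW.IsStableUnderCoproductsOfShape ι := by
  refine .mk _ _ fun X Y _ _ f hf ↦ P.trW_of_op ?_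
  choose Z g h hT hZ using fun i ↦ P.op.trW_of_unop (f := (f i).op) (hf i)
  have hPZ : P.op (∏ᶜ Z) :=
    P.op.prop_of_iso (opCoproductIsoProduct fun i ↦ (Z i).unop) (P.prop_colimit _ fun i ↦ hZ i.as)
  refine (P.op.trW.arrow_mk_iso_iff ?_).2
    (ObjectProperty.trW.mk _ (productTriangle_distinguished _ hT) hPZ)
  refine Arrow.isoMk (opCoproductIsoProduct Y) (opCoproductIsoProduct X)
    (Limits.Pi.hom_ext _ _ fun i ↦ ?_)
  change ((opCoproductIsoProduct Y).hom ≫ Limits.Pi.map fun i ↦ (f i).op) ≫ Pi.π _ i =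
    ((Limits.Sigma.map f).op ≫ (opCoproductIsoProduct X).hom) ≫ Pi.π _ i
  simp [← op_comp]

theorem prop_of_trW_of_fac (P : ObjectProperty T) [P.IsTriangulated] [P.IsStableUnderRetracts]
    {X Z : T} (hZ : P Z) (a : X ⟶ Z) (b : Z ⟶ X) (h : P.trW (a ≫ b)) : P X := by
  rw [← isZero_trW_Q_obj_iff P]
  have : IsIso (P.trW.Q.map (a ≫ b)) := Localization.inverts P.trW.Q P.trW _ h
  rw [(trW_map_Q_eq_zero_iff P _).2 ⟨Z, a, b, hZ, rfl⟩] at this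
  exact ((isIsoZero_iff_source_target_isZero _ _).1 this).1

-- `Z` is the cone of the idempotent `1 - r ≫ i` of `Y`, which becomes invertible modulo `c`.
theorem exists_retract_mem_of_retract {P : ObjectProperty T} [P.IsTriangulated]
    [P.IsClosedUnderIsomorphisms] {c Y : T} (h : Retract c Y) (hY : P Y) :
    ∃ Z, P Z ∧ Nonempty (Retract c Z) ∧ ∀ (P' : ObjectProperty T) [P'.IsTriangulated]
      [P'.IsStableUnderRetracts], P' c → P' Z := by
  obtain ⟨Z, g, δ, hT⟩ := distinguished_cocone_triangle (𝟙 Y - h.r ≫ h.i)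
  obtain ⟨r, hr⟩ : ∃ r : Z ⟶ c, h.r = g ≫ r :=
    Triangle.yoneda_exact₂ _ hT h.r (show (𝟙 Y - h.r ≫ h.i) ≫ h.r = 0 by simp)
  refine ⟨Z, P.ext_of_isTriangulatedClosed₃ _ hT hY hY,
    ⟨h.i ≫ g, r, by rw [Category.assoc, ← hr, h.retract]⟩, fun P' _ _ hc ↦ ?_⟩
  have hQ : P'.trW.Q.map (𝟙 Y - h.r ≫ h.i) = 𝟙 _ := by
    rw [Functor.map_sub, (trW_map_Q_eq_zero_iff P' _).2 ⟨c, h.r, h.i, hc, rfl⟩, sub_zero,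
      CategoryTheory.Functor.map_id]
  refine (P'.trW_iff_of_distinguished _ hT).1 ?_
  rw [trW_eq_inverseImage_isomorphisms]
  change IsIso (P'.trW.Q.map (𝟙 Y - h.r ≫ h.i))
  rw [hQ]
  infer_instance

end Verdier

section Colon

variable {T : Type u} [Category.{v} T] [Preadditive T] [HasZeroObject T]
  [HasShift T ℤ] [∀ n : ℤ, (shiftFunctor T n).Additive] [Pretriangulated T]
  {R : Type*} [CommRing R] [Linear R T]

/-- The colon `(P : r)`: the objects on which multiplication by `r` has its cone in `P`. -/
def colon (P : ObjectProperty T) (r : R) : ObjectProperty T :=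
  fun X ↦ P.trW (r • 𝟙 X)

/-- The iterated colon `(((P : r₁) : r₂) : …)` along a list. -/
def listColon (P : ObjectProperty T) (l : List R) : ObjectProperty T :=
  l.foldl colon P

variable (P : ObjectProperty T) [P.IsTriangulated] (r : R)

instance : (colon P r).IsClosedUnderIsomorphisms where
  of_iso {X Y} e h := (P.trW.arrow_mk_iso_iff (Arrow.isoMk e e (by simp))).1 h

theorem le_colon [P.IsClosedUnderIsomorphisms] : P ≤ colon P r := fun X hX ↦ by
  obtain ⟨Z, g, h, hfgh⟩ := distinguished_cocone_triangle (r • 𝟙 X)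
  exact (P.trW_iff_of_distinguished _ hfgh).2 (P.ext_of_isTriangulatedClosed₃ _ hfgh hX hX)

variable [IsTriangulated T]

instance [∀ n : ℤ, (shiftFunctor T n).Linear R] [P.IsStableUnderRetracts] :
    (colon P r).IsTriangulated where
  exists_zero := ⟨0, isZero_zero T, le_colon P r _ P.prop_zero⟩
  isStableUnderShiftBy n := ⟨fun X hX ↦ by
    change P.trW _
    rw [← (shiftFunctor T n).map_id, ← Functor.map_smul]
    exact ObjectProperty.trW.shift hX n⟩
  toIsTriangulatedClosed₂ := .mk' fun Tr hTr h₁ h₃ ↦ by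
    let φ : Tr ⟶ Tr :=
      { hom₁ := r • 𝟙 _
        hom₂ := r • 𝟙 _
        hom₃ := r • 𝟙 _
        comm₃ := by simp [Functor.map_smul] }
    change P.trW φ.hom₂
    change P.trW φ.hom₁ at h₁
    change P.trW φ.hom₃ at h₃
    rw [trW_eq_inverseImage_isomorphisms] at h₁ h₃ ⊢
    have hQ := P.trW.Q.map_distinguished _ hTr
    exact isIso₂_of_isIso₁₃ (P.trW.Q.mapTriangle.map φ) hQ hQ h₁ h₃

instance (ι : Type*) [HasCoproductsOfShape ι T] [P.IsClosedUnderIsomorphisms]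
    [P.IsClosedUnderColimitsOfShape (Discrete ι)] :
    (colon P r).IsClosedUnderColimitsOfShape (Discrete ι) := by
  refine .mk' fun _ hX ↦ ?_
  obtain ⟨F, hF⟩ := hX
  let φ : F ⟶ F := { app j := r • 𝟙 (F.obj j) }
  have hφ : r • 𝟙 (colimit F) = colimMap φ := colimit.hom_ext fun j ↦ by simp [φ]
  change P.trW _
  rw [hφ]
  exact P.trW.colimMap φ hF

theorem prop_of_colon_of_fac [P.IsStableUnderRetracts] {X Z : T} (hX : colon P r X) (hZ : P Z)
    (a : X ⟶ Z) (b : Z ⟶ X) (hab : a ≫ b = r • 𝟙 X) : P X := by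
  refine prop_of_trW_of_fac P hZ a b ?_
  rw [hab]
  exact hX

theorem prop_of_colon_of_pow_smul_eq_zero [P.IsStableUnderRetracts] {X : T} (n : ℕ)
    (hn : r ^ n • 𝟙 X = 0) (h : colon P r X) : P X := by
  have hpow (m : ℕ) : P.trW (r ^ m • 𝟙 X) := by
    induction m with
    | zero => simpa using P.trW.id_mem X
    | succ m ih => simpa [pow_succ, mul_smul] using P.trW.comp_mem _ _ h ih
  refine prop_of_trW_of_fac P P.prop_zero (0 : X ⟶ 0) 0 ?_
  rw [zero_comp, ← hn]
  exact hpow n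

section ListColon

variable [∀ n : ℤ, (shiftFunctor T n).Linear R] [HasCoproducts.{w} T]

theorem isLocalizingSub_listColon {L : Set T} (hL : IsLocalizingSub.{w} L) (l : List R) :
    IsLocalizingSub.{w} {X | listColon hL.toObjectProperty l X} := by
  induction l generalizing L with
  | nil => exact hL
  | cons f _ ih => exact ih (isLocalizingSub_setOf (colon hL.toObjectProperty f))

theorem mem_of_listColon_of_nilpotent {L : Set T} (hL : IsLocalizingSub.{w} L) (l : List R) {X : T}
    (hX : ∀ r ∈ l, ∃ n, r ^ n • 𝟙 X = 0) (h : listColon hL.toObjectProperty l X) : X ∈ L := by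
  induction l generalizing L with
  | nil => exact h
  | cons f l ih =>
    obtain ⟨n, hn⟩ := hX f List.mem_cons_self
    exact prop_of_colon_of_pow_smul_eq_zero hL.toObjectProperty f n hn
      (ih (isLocalizingSub_setOf (colon hL.toObjectProperty f))
        (fun r hr ↦ hX r (List.mem_cons_of_mem f hr)) h)

end ListColon

end Colon

section Compact

section Additive

variable {T : Type u} [Category.{v} T] [Preadditive T]

section

variable {ι : Type w} {f : ι → T} {c : Cofan f} (hc : IsColimit c)

/-- The projection of a coproduct onto a summand, for an arbitrary colimit cofan. -/
noncomputable def cofanProj (i : ι) : c.pt ⟶ f i :=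
  open Classical in
  Cofan.IsColimit.desc hc fun j ↦ if h : j = i then eqToHom (congrArg f h) else 0

theorem inj_cofanProj (i : ι) : c.inj i ≫ cofanProj hc i = 𝟙 _ := by
  simp [cofanProj, Cofan.IsColimit.fac]

theorem inj_cofanProj_of_ne {i j : ι} (h : i ≠ j) : c.inj i ≫ cofanProj hc j = 0 := by
  simp [cofanProj, Cofan.IsColimit.fac, h]

theorem sum_comp_inj_comp_cofanProj {x : T} (s : Finset ι) (h : ∀ i, x ⟶ f i) {i : ι}
    (hi : i ∉ s → h i = 0) : (∑ j ∈ s, h j ≫ c.inj j) ≫ cofanProj hc i = h i := by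
  rw [Preadditive.sum_comp, Finset.sum_eq_single i]
  · simp [inj_cofanProj]
  · intro j _ hj
    simp [inj_cofanProj_of_ne hc hj]
  · intro his
    simp [hi his]

/-- The endomorphism of a coproduct which kills the summands indexed by `s` and fixes the others;
an object is compact when each of its maps to a coproduct is annihilated by one of these. -/
noncomputable def cofanTail (s : Finset ι) : c.pt ⟶ c.pt :=
  𝟙 c.pt - ∑ i ∈ s, cofanProj hc i ≫ c.inj i

theorem inj_cofanTail_of_mem {s : Finset ι} {i : ι} (hi : i ∈ s) :
    c.inj i ≫ cofanTail hc s = 0 := by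
  rw [cofanTail, Preadditive.comp_sub, Category.comp_id, Preadditive.comp_sum,
    Finset.sum_eq_single_of_mem i hi, reassoc_of% inj_cofanProj hc i, sub_self]
  intro j _ hj
  rw [reassoc_of% inj_cofanProj_of_ne hc hj.symm, zero_comp]

theorem comp_cofanTail_eq_zero_iff {x : T} (g : x ⟶ c.pt) (s : Finset ι) :
    g ≫ cofanTail hc s = 0 ↔ ∃ h : ∀ i, x ⟶ f i, g = ∑ i ∈ s, h i ≫ c.inj i := by
  constructor
  · intro hg
    rw [cofanTail, Preadditive.comp_sub, Category.comp_id, sub_eq_zero] at hg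
    exact ⟨fun i ↦ g ≫ cofanProj hc i, hg.trans (by simp [Preadditive.comp_sum])⟩
  · rintro ⟨h, rfl⟩
    rw [Preadditive.sum_comp]
    exact Finset.sum_eq_zero fun i hi ↦ by
      rw [Category.assoc, inj_cofanTail_of_mem hc hi, comp_zero]

theorem comp_cofanTail_eq_zero_of_subset {x : T} {g : x ⟶ c.pt} {s t : Finset ι} (hst : s ⊆ t)
    (hg : g ≫ cofanTail hc s = 0) : g ≫ cofanTail hc t = 0 := by
  obtain ⟨h, rfl⟩ := (comp_cofanTail_eq_zero_iff hc g s).1 hg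
  rw [Preadditive.sum_comp]
  exact Finset.sum_eq_zero fun i hi ↦ by
    rw [Category.assoc, inj_cofanTail_of_mem hc (hst hi), comp_zero]

theorem cofanTail_comp_cofanTail_of_subset {s t : Finset ι} (hst : s ⊆ t) :
    cofanTail hc s ≫ cofanTail hc t = cofanTail hc t := by
  conv_lhs => rw [cofanTail.eq_def hc s]
  rw [Preadditive.sub_comp, Category.id_comp, Preadditive.sum_comp, Finset.sum_eq_zero, sub_zero]
  intro i hi
  rw [Category.assoc, inj_cofanTail_of_mem hc (hst hi), comp_zero]

end

theorem isCompactObj_iff_exists_eq_sum (x : T) : IsCompactObj.{w} x ↔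
    ∀ ⦃ι : Type w⦄ (f : ι → T) (c : Cofan f), IsColimit c → ∀ g : x ⟶ c.pt,
      ∃ (s : Finset ι) (h : ∀ i, x ⟶ f i), g = ∑ i ∈ s, h i ≫ c.inj i := by
  classical
  have comparison_apply {ι : Type w} (f : ι → T) (c : Cofan f) (φ : Π₀ i, x ⟶ f i) :
      cofanHomComparison x f c φ = ∑ i ∈ φ.support, φ i ≫ c.inj i := by
    simp only [cofanHomComparison, DFinsupp.sumAddHom_apply, DFinsupp.sum]
    congr!
  refine ⟨fun hx ι f c hc g ↦ ?_, fun hx ι f c hc ↦ ⟨fun φ ψ hφψ ↦ ?_, fun g ↦ ?_⟩⟩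
  · obtain ⟨φ, rfl⟩ := (hx f c hc).2 g
    exact ⟨φ.support, φ, comparison_apply f c φ⟩
  · have comparison_proj (χ : Π₀ i, x ⟶ f i) (i : ι) :
        cofanHomComparison x f c χ ≫ cofanProj hc i = χ i := by
      rw [comparison_apply, sum_comp_inj_comp_cofanProj hc _ _ DFinsupp.notMem_support_iff.1]
    ext i
    rw [← comparison_proj φ, hφψ, comparison_proj]
  · obtain ⟨s, h, rfl⟩ := hx f c hc g
    refine ⟨DFinsupp.mk s fun i ↦ h i, ?_⟩
    rw [comparison_apply]
    refine (Finset.sum_subset DFinsupp.support_mk_subset fun i _ hi' ↦ ?_).trans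
      (Finset.sum_congr rfl fun i hi ↦ ?_)
    · rw [DFinsupp.notMem_support_iff.1 hi', zero_comp]
    · rw [DFinsupp.mk_of_mem hi]

theorem isCompactObj_iff_exists_comp_cofanTail (x : T) : IsCompactObj.{w} x ↔
    ∀ ⦃ι : Type w⦄ (f : ι → T) (c : Cofan f) (hc : IsColimit c) (g : x ⟶ c.pt),
      ∃ s : Finset ι, g ≫ cofanTail hc s = 0 := by
  simp only [comp_cofanTail_eq_zero_iff, isCompactObj_iff_exists_eq_sum]

theorem IsCompactObj.map_of_adjunction {T' : Type*} [Category* T'] [Preadditive T']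
    {F : T ⥤ T'} [F.Additive] {G : T' ⥤ T} (adj : F ⊣ G)
    [∀ ι : Type w, PreservesColimitsOfShape (Discrete ι) G] {x : T} (hx : IsCompactObj.{w} x) :
    IsCompactObj.{w} (F.obj x) := by
  rw [isCompactObj_iff_exists_eq_sum] at hx ⊢
  intro ι f c hc g
  obtain ⟨s, h, hs⟩ := hx _ _ (isColimitCofanMkObjOfIsColimit G f _
    (hc.ofIsoColimit (Cofan.ext (Iso.refl _)))) (adj.homEquiv _ _ g)
  refine ⟨s, fun i ↦ (adj.homEquiv _ _).symm (h i), ?_⟩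
  rw [← (adj.homEquiv _ _).symm_apply_apply g, hs]
  simp [Adjunction.homEquiv_counit, Preadditive.sum_comp]

theorem IsCompactObj.exists_eq_sum {x : T} (hx : IsCompactObj.{w} x) {ι : Type*} [Small.{w} ι]
    (f : ι → T) [HasCoproduct f] (g : x ⟶ ∐ f) :
    ∃ (s : Finset ι) (h : ∀ i, x ⟶ f i), g = ∑ i ∈ s, h i ≫ Sigma.ι f i := by
  let e := equivShrink.{w} ι
  obtain ⟨s, h, hs⟩ := (isCompactObj_iff_exists_eq_sum x).1 hx _ _
    (Cofan.isColimitEquivOfEquiv e.symm _ (coproductIsCoproduct f)) g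
  refine ⟨s.map e.symm.toEmbedding,
    fun i ↦ h (e i) ≫ eqToHom (congrArg f (e.symm_apply_apply i)), ?_⟩
  have transport {i j : Shrink ι} (hij : j = i) :
      h i ≫ Sigma.ι f (e.symm i) =
        (h j ≫ eqToHom (congrArg (f ∘ e.symm) hij)) ≫ Sigma.ι f (e.symm i) := by
    subst hij
    simp
  rw [Finset.sum_map]
  exact hs.trans (Finset.sum_congr rfl fun i _ ↦ transport (e.apply_symm_apply i))

theorem IsCompactObj.shift [HasShift T ℤ] [∀ n : ℤ, (shiftFunctor T n).Additive] {x : T}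
    (hx : IsCompactObj.{w} x) (n : ℤ) : IsCompactObj.{w} (x⟦n⟧) :=
  have : (shiftEquiv T n).functor.Additive := inferInstanceAs (shiftFunctor T n).Additive
  hx.map_of_adjunction (shiftEquiv T n).toAdjunction

end Additive

section Triangulated

variable {T : Type u} [Category.{v} T] [Preadditive T] [HasZeroObject T]
  [HasShift T ℤ] [∀ n : ℤ, (shiftFunctor T n).Additive] [Pretriangulated T]

theorem IsCompactObj.obj₂ {Tr : Triangle T} (hTr : Tr ∈ distTriang T)
    (h₁ : IsCompactObj.{w} Tr.obj₁) (h₃ : IsCompactObj.{w} Tr.obj₃) : IsCompactObj.{w} Tr.obj₂ := by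
  classical
  rw [isCompactObj_iff_exists_comp_cofanTail] at h₁ h₃ ⊢
  intro ι f c hc g
  obtain ⟨s, hs⟩ := h₁ f c hc (Tr.mor₁ ≫ g)
  obtain ⟨k, hk⟩ := Triangle.yoneda_exact₂ _ hTr (g ≫ cofanTail hc s) (by simpa using hs)
  obtain ⟨t, ht⟩ := h₃ f c hc k
  refine ⟨s ∪ t, ?_⟩
  rw [← cofanTail_comp_cofanTail_of_subset hc (Finset.subset_union_left (s₁ := s) (s₂ := t)),
    reassoc_of% hk, comp_cofanTail_eq_zero_of_subset hc Finset.subset_union_right ht, comp_zero]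

instance : ObjectProperty.IsClosedUnderIsomorphisms (IsCompactObj.{w} : ObjectProperty T) where
  of_iso e hx := by
    rw [isCompactObj_iff_exists_comp_cofanTail] at hx ⊢
    intro ι f c hc g
    obtain ⟨s, hs⟩ := hx f c hc (e.hom ≫ g)
    exact ⟨s, (cancel_epi e.hom).1 (by rw [← Category.assoc, hs, comp_zero])⟩

instance : ObjectProperty.IsTriangulated (IsCompactObj.{w} : ObjectProperty T) where
  exists_zero := ⟨0, isZero_zero _, (isCompactObj_iff_exists_comp_cofanTail _).2
    fun _ _ _ _ _ ↦ ⟨∅, (isZero_zero T).eq_of_src _ _⟩⟩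
  isStableUnderShiftBy n := ⟨fun _ hx ↦ hx.shift n⟩
  toIsTriangulatedClosed₂ := .mk' fun _ hT h₁ h₃ ↦ .obj₂ hT h₁ h₃

end Triangulated

end Compact

section Telescope

section

variable {T : Type u} [Category.{v} T] [HasCoproductsOfShape ℕ T] (X : ℕ ⥤ T)

/-- The endomorphism `σ` of `∐ Xₙ` induced by the transition maps `Xₙ ⟶ Xₙ₊₁` of a sequence; the
homotopy colimit of the sequence is the cone of `1 - σ`. -/
noncomputable def telescopeShift : End (∐ X.obj) :=
  Sigma.desc fun n ↦ X.map (homOfLE n.le_succ) ≫ Sigma.ι X.obj (n + 1)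

theorem ι_telescopeShift (n : ℕ) : Sigma.ι X.obj n ≫ telescopeShift X =
    X.map (homOfLE n.le_succ) ≫ Sigma.ι X.obj (n + 1) :=
  Sigma.ι_desc _ _

theorem ι_telescopeShift_pow (n m : ℕ) : Sigma.ι X.obj n ≫ telescopeShift X ^ m =
    X.map (homOfLE (Nat.le_add_right n m)) ≫ Sigma.ι X.obj (n + m) := by
  induction m with
  | zero =>
    rw [pow_zero, End.one_def, Category.comp_id]
    exact (by simp : Sigma.ι X.obj n = X.map (𝟙 n) ≫ Sigma.ι X.obj n)
  | succ m ih =>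
    rw [pow_succ', End.mul_def, reassoc_of% ih, ι_telescopeShift, ← Functor.map_comp_assoc]
    rfl

end

variable {T : Type u} [Category.{v} T] [Preadditive T]

theorem isIso_one_sub_of_isDetecting {P : ObjectProperty T} (hP : P.IsDetecting) {W : T}
    (σ : End W) (h : ∀ G, P G → ∀ y : G ⟶ W, ∃ m : ℕ, y ≫ σ ^ m = 0) :
    IsIso (1 - σ : End W) := by
  have comp_one_sub {G : T} (y : G ⟶ W) (τ : End W) : y ≫ (1 - τ) = y - y ≫ τ :=
    (Preadditive.comp_sub ..).trans (by rw [End.one_def, Category.comp_id])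
  refine hP _ fun G hG y ↦ existsUnique_of_exists_of_unique ?_ fun z z' hz hz' ↦ ?_
  · obtain ⟨m, hm⟩ := h G hG y
    refine ⟨y ≫ (∑ i ∈ Finset.range m, σ ^ i), ?_⟩
    rw [Category.assoc, ← End.mul_def, mul_neg_geom_sum, comp_one_sub, hm, sub_zero]
  · obtain ⟨m, hm⟩ := h G hG (z - z')
    have hd : (z - z') ≫ (1 - σ) = 0 := by rw [Preadditive.sub_comp, hz, hz', sub_self]
    rw [← sub_eq_zero, ← sub_zero (z - z'), ← hm, ← comp_one_sub, ← geom_sum_mul_neg, End.mul_def,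
      reassoc_of% hd, zero_comp, hm]

variable [HasCoproductsOfShape ℕ T] (X : ℕ ⥤ T)

theorem ι_one_sub_telescopeShift (n : ℕ) : Sigma.ι X.obj n ≫ (1 - telescopeShift X : End _) =
    Sigma.ι X.obj n - X.map (homOfLE n.le_succ) ≫ Sigma.ι X.obj (n + 1) := by
  rw [← ι_telescopeShift]
  exact (Preadditive.comp_sub ..).trans (by rw [End.one_def, Category.comp_id])

theorem IsCompactObj.exists_comp_telescopeShift_pow_eq_zero {G : T} (hG : IsCompactObj.{w} G)
    (h : ∀ n, ∀ g : G ⟶ X.obj n, ∃ (m : ℕ) (hm : n ≤ m), g ≫ X.map (homOfLE hm) = 0)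
    (y : G ⟶ ∐ X.obj) : ∃ m : ℕ, y ≫ telescopeShift X ^ m = 0 := by
  obtain ⟨s, g, rfl⟩ := hG.exists_eq_sum X.obj y
  choose m hm hg using fun i ↦ h i (g i)
  refine ⟨s.sup m, ?_⟩
  rw [Preadditive.sum_comp]
  refine Finset.sum_eq_zero fun i hi ↦ ?_
  have hi' : m i ≤ i + s.sup m := (Finset.le_sup hi).trans (Nat.le_add_left _ _)
  rw [Category.assoc, ι_telescopeShift_pow, ← homOfLE_comp (hm i) hi', Functor.map_comp,
    Category.assoc, reassoc_of% hg, zero_comp]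

theorem isIso_one_sub_telescopeShift {κ : Type*} {G : κ → T} (hG : ∀ k, IsCompactObj.{w} (G k))
    (hdet : (ObjectProperty.ofObj G).IsDetecting)
    (h : ∀ k n, ∀ g : G k ⟶ X.obj n, ∃ (m : ℕ) (hm : n ≤ m), g ≫ X.map (homOfLE hm) = 0) :
    IsIso (1 - telescopeShift X : End _) := by
  refine isIso_one_sub_of_isDetecting hdet _ ?_
  rintro _ ⟨k⟩ y
  exact (hG k).exists_comp_telescopeShift_pow_eq_zero X (h k) y

variable {X} in
theorem exists_comp_map_eq_zero_of_isIso_one_sub [IsIso (1 - telescopeShift X : End _)] {c : T}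
    (hc : IsCompactObj.{w} c) (a : c ⟶ X.obj 0) :
    ∃ n : ℕ, a ≫ X.map (homOfLE n.zero_le) = 0 := by
  let φ : ∐ X.obj ⟶ ∐ X.obj := (1 - telescopeShift X : End _)
  have : IsIso φ := ‹_›
  obtain ⟨s, h, hs⟩ := hc.exists_eq_sum X.obj (a ≫ Sigma.ι X.obj 0 ≫ inv φ)
  obtain ⟨N, hN⟩ := Infinite.exists_notMem_finset s
  -- `ψ` is the map to `X_N` on the first stages, so that `φ ≫ ψ` is the projection to `X_N`.
  let ψ : ∐ X.obj ⟶ X.obj N :=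
    Sigma.desc fun n ↦ if hn : n ≤ N then X.map (homOfLE hn) else 0
  have ι_φ_ψ (n : ℕ) (hn : n ≠ N) : Sigma.ι X.obj n ≫ φ ≫ ψ = 0 := by
    rw [reassoc_of% ι_one_sub_telescopeShift X n, Preadditive.sub_comp, Category.assoc,
      Sigma.ι_desc, Sigma.ι_desc]
    rcases lt_or_gt_of_ne hn with hn | hn
    · rw [dif_pos hn.le, dif_pos (Nat.succ_le_of_lt hn), ← Functor.map_comp, homOfLE_comp, sub_self]
    · rw [dif_neg hn.not_ge, dif_neg (by omega), comp_zero, sub_zero]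
  have hψ : Sigma.ι X.obj 0 ≫ ψ = X.map (homOfLE N.zero_le) := by
    rw [Sigma.ι_desc, dif_pos N.zero_le]
  refine ⟨N, ?_⟩
  calc a ≫ X.map (homOfLE N.zero_le) = (a ≫ Sigma.ι X.obj 0 ≫ inv φ) ≫ φ ≫ ψ := by simp [hψ]
    _ = 0 := by
      rw [hs, Preadditive.sum_comp]
      refine Finset.sum_eq_zero fun i hi ↦ ?_
      rw [Category.assoc, ι_φ_ψ i (ne_of_mem_of_not_mem hi hN), comp_zero]

end Telescope

section TelescopeTriangulated

variable {T : Type u} [Category.{v} T] [Preadditive T] [HasZeroObject T]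
  [HasShift T ℤ] [∀ n : ℤ, (shiftFunctor T n).Additive] [Pretriangulated T] [IsTriangulated T]
  [HasCoproductsOfShape ℕ T]

-- Modulo `P` the sequence is constant with invertible `1 - σ`, but the fold map of a constant
-- sequence kills `1 - σ`.
theorem prop_obj_zero_of_isIso_one_sub (P : ObjectProperty T) [P.IsTriangulated]
    [P.IsClosedUnderIsomorphisms] [P.IsClosedUnderColimitsOfShape (Discrete ℕ)] (X : ℕ ⥤ T)
    [IsIso (1 - telescopeShift X : End _)]
    (hX : ∀ n : ℕ, P.trW (X.map (homOfLE n.le_succ))) : P (X.obj 0) := by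
  have trW_map (n : ℕ) : P.trW (X.map (homOfLE n.zero_le)) := by
    induction n with
    | zero =>
      rw [show homOfLE (Nat.zero_le 0) = 𝟙 0 from rfl, X.map_id]
      exact P.trW.id_mem _
    | succ n ih =>
      rw [← homOfLE_comp n.zero_le n.le_succ, X.map_comp]
      exact P.trW.comp_mem _ _ ih (hX n)
  let X₀ : ℕ ⥤ T := (Functor.const ℕ).obj (X.obj 0)
  let ι₀ (n : ℕ) : X.obj 0 ⟶ ∐ X₀.obj := Sigma.ι X₀.obj n
  let τ : ∐ X₀.obj ⟶ ∐ X.obj := Limits.Sigma.map fun n ↦ X.map (homOfLE n.zero_le)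
  let fold : ∐ X₀.obj ⟶ X.obj 0 := Sigma.desc fun _ ↦ 𝟙 _
  let φ : ∐ X.obj ⟶ ∐ X.obj := (1 - telescopeShift X : End _)
  let φ₀ : ∐ X₀.obj ⟶ ∐ X₀.obj := (1 - telescopeShift X₀ : End _)
  have : IsIso φ := ‹_›
  have trW_τ : P.trW τ := P.trW.colimMap _ fun n ↦ trW_map n.as
  have ι_τ (n : ℕ) : ι₀ n ≫ τ = X.map (homOfLE n.zero_le) ≫ Sigma.ι X.obj n := Sigma.ι_map ..
  have ι_fold (n : ℕ) : ι₀ n ≫ fold = 𝟙 (X.obj 0) := Sigma.ι_desc _ _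
  have ι_φ₀ (n : ℕ) : ι₀ n ≫ φ₀ = ι₀ n - ι₀ (n + 1) :=
    (ι_one_sub_telescopeShift X₀ n).trans (congrArg _ (Category.id_comp _))
  have φ₀_τ : φ₀ ≫ τ = τ ≫ φ := Sigma.hom_ext _ _ fun n ↦ by
    change ι₀ n ≫ φ₀ ≫ τ = ι₀ n ≫ τ ≫ φ
    rw [reassoc_of% ι_φ₀, reassoc_of% ι_τ, ι_one_sub_telescopeShift X n, Preadditive.sub_comp, ι_τ,
      ι_τ, Preadditive.comp_sub, ← Functor.map_comp_assoc, homOfLE_comp]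
  have φ₀_fold : φ₀ ≫ fold = 0 := Sigma.hom_ext _ _ fun n ↦ by
    change ι₀ n ≫ φ₀ ≫ fold = ι₀ n ≫ 0
    rw [reassoc_of% ι_φ₀, Preadditive.sub_comp, ι_fold, ι_fold, sub_self, comp_zero]
  have trW_φ₀ : P.trW φ₀ := by
    refine P.trW.of_postcomp φ₀ τ trW_τ ?_
    rw [φ₀_τ]
    exact P.trW.comp_mem _ _ trW_τ (MorphismProperty.of_isIso _ _)
  have Q_fold : P.trW.Q.map fold = 0 := by
    have : IsIso (P.trW.Q.map φ₀) := Localization.inverts P.trW.Q P.trW _ trW_φ₀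
    rw [← cancel_epi (P.trW.Q.map φ₀), ← Functor.map_comp, φ₀_fold, Functor.map_zero, comp_zero]
  rw [← isZero_trW_Q_obj_iff P, IsZero.iff_id_eq_zero, ← P.trW.Q.map_id, ← ι_fold 0,
    Functor.map_comp, Q_fold, comp_zero]

end TelescopeTriangulated

section Cells

variable {T : Type u} [Category.{v} T] [Preadditive T] [HasZeroObject T]
  [HasShift T ℤ] [∀ n : ℤ, (shiftFunctor T n).Additive] [Pretriangulated T]
  [HasCoproducts.{w} T] {κ : Type w} (G : κ → T)

/-- `t` is the cone of a map to its source from a coproduct of objects of the family `G`, and kills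
every map from a member of `G`. -/
structure IsCellAttachment {X Y : T} (t : X ⟶ Y) : Prop where
  exists_triangle : ∃ (ι : Type w) (k : ι → κ) (a : (∐ fun i ↦ G (k i)) ⟶ X)
    (b : Y ⟶ (∐ fun i ↦ G (k i))⟦(1 : ℤ)⟧), Triangle.mk a t b ∈ distTriang T
  comp_eq_zero (k : κ) (g : G k ⟶ X) : g ≫ t = 0

theorem exists_isCellAttachment [∀ k X, Small.{w} (G k ⟶ X)] (X : T) :
    ∃ (Y : T) (t : X ⟶ Y), IsCellAttachment G t := by
  let cells (j : Σ k, Shrink.{w} (G k ⟶ X)) : G j.1 ⟶ X := (equivShrink _).symm j.2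
  obtain ⟨Y, t, b, hT⟩ := distinguished_cocone_triangle (Sigma.desc cells)
  refine ⟨Y, t, ⟨_, _, _, b, hT⟩, fun k g ↦ ?_⟩
  have hg : Sigma.ι (fun j : Σ k, Shrink.{w} (G k ⟶ X) ↦ G j.1) ⟨k, equivShrink _ g⟩ ≫
      Sigma.desc cells = g := (Sigma.ι_desc _ _).trans ((equivShrink _).symm_apply_apply g)
  rw [← hg, Category.assoc]
  exact (congrArg _ (comp_distTriang_mor_zero₁₂ _ hT)).trans comp_zero

theorem exists_sequence_isCellAttachment [∀ k X, Small.{w} (G k ⟶ X)] (X : T) :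
    ∃ F : ℕ ⥤ T, F.obj 0 = X ∧ ∀ n : ℕ, IsCellAttachment G (F.map (homOfLE n.le_succ)) := by
  choose next t ht using exists_isCellAttachment.{w} G
  let obj : ℕ → T := Nat.rec X fun _ ↦ next
  refine ⟨Functor.ofSequence (X := obj) fun n ↦ t (obj n), rfl, fun n ↦ ?_⟩
  rw [Functor.ofSequence_map_homOfLE_succ]
  exact ht (obj n)

end Cells

section CompactGenerators

variable {T : Type u} [Category.{v} T] [Preadditive T] [HasZeroObject T]
  [HasShift T ℤ] [∀ n : ℤ, (shiftFunctor T n).Additive] [Pretriangulated T]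
  [HasCoproducts.{w} T] {κ : Type w} {G : κ → T}

theorem IsCellAttachment.trW {X Y : T} {t : X ⟶ Y} (ht : IsCellAttachment G t)
    (P : ObjectProperty T) [P.IsTriangulated] [P.IsClosedUnderIsomorphisms]
    [∀ ι : Type w, P.IsClosedUnderColimitsOfShape (Discrete ι)] (hP : ∀ k, P (G k)) : P.trW t := by
  obtain ⟨ι, k, a, b, hT⟩ := ht.exists_triangle
  exact .mk _ (rot_of_distTriang _ hT) (P.le_shift 1 _ (P.prop_colimit _ fun i ↦ hP _))

variable [IsTriangulated T]

section

variable (hG : ∀ k, IsCompactObj.{w} (G k)) (hdet : (ObjectProperty.ofObj G).IsDetecting)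
include hG hdet

theorem prop_obj_zero_of_forall_exists_comp_map_eq_zero
    (P : ObjectProperty T) [P.IsTriangulated]
    [P.IsClosedUnderIsomorphisms] [P.IsClosedUnderColimitsOfShape (Discrete ℕ)] (X : ℕ ⥤ T)
    (hX : ∀ n : ℕ, P.trW (X.map (homOfLE n.le_succ)))
    (h : ∀ k n, ∀ g : G k ⟶ X.obj n, ∃ (m : ℕ) (hm : n ≤ m), g ≫ X.map (homOfLE hm) = 0) :
    P (X.obj 0) :=
  have := hasCoproductsOfShape_of_small.{w} T ℕ
  have := isIso_one_sub_telescopeShift X hG hdet h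
  prop_obj_zero_of_isIso_one_sub P X hX

variable [∀ k X, Small.{w} (G k ⟶ X)]

theorem IsLocalizingSub.mem_of_isDetecting {L : Set T} (hL : IsLocalizingSub.{w} L)
    (hGL : ∀ k, G k ∈ L) (X : T) : X ∈ L := by
  obtain ⟨F, rfl, hF⟩ := exists_sequence_isCellAttachment.{w} G X
  exact prop_obj_zero_of_forall_exists_comp_map_eq_zero hG hdet hL.toObjectProperty F
    (fun n ↦ (hF n).trW _ hGL) fun k n g ↦ ⟨n + 1, n.le_succ, (hF n).comp_eq_zero k g⟩

end

theorem trW_map_Q_eq_zero_of_comp_map_eq_zero {P : ObjectProperty T} [P.IsTriangulated]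
    (hP : ∀ X, P X → IsCompactObj.{w} X) (hGP : ∀ k, P (G k)) {F : ℕ ⥤ T}
    (hF : ∀ n : ℕ, IsCellAttachment G (F.map (homOfLE n.le_succ))) {n m : ℕ} (hnm : n ≤ m) {c : T}
    (hc : IsCompactObj.{w} c) (a : c ⟶ F.obj n) (ha : a ≫ F.map (homOfLE hnm) = 0) :
    P.trW.Q.map a = 0 := by
  induction hnm using Nat.decreasingInduction generalizing c with
  | self =>
    have hm : F.map (homOfLE (le_refl m)) = 𝟙 (F.obj m) := F.map_id m
    rw [show a = 0 by simpa [hm] using ha, Functor.map_zero]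
  | of_succ n hnm ih =>
    have ha' : P.trW.Q.map (a ≫ F.map (homOfLE n.le_succ)) = 0 :=
      ih hc _ (by rwa [Category.assoc, ← F.map_comp, homOfLE_comp])
    obtain ⟨Z, p, q, hZ, hpq⟩ := (trW_map_Q_eq_zero_iff P _).1 ha'
    obtain ⟨W, s, d, hs⟩ := distinguished_cocone_triangle₁ p
    have hW : IsCompactObj.{w} W :=
      IsCompactObj.obj₂ (inv_rot_of_distTriang _ hs) ((hP Z hZ).shift (-1)) hc
    have trW_s : P.trW s := .mk _ hs hZ
    obtain ⟨ι, k, cells, b, hT⟩ := (hF n).exists_triangle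
    have s_p : s ≫ p = 0 := comp_distTriang_mor_zero₁₂ _ hs
    obtain ⟨e, he⟩ : ∃ e : W ⟶ ∐ fun i ↦ G (k i), s ≫ a = e ≫ cells :=
      Triangle.coyoneda_exact₂ _ hT (s ≫ a) (show (s ≫ a) ≫ F.map (homOfLE n.le_succ) = 0 by
        rw [Category.assoc, ← hpq, reassoc_of% s_p, zero_comp])
    have hsa : P.trW.Q.map (s ≫ a) = 0 := by
      obtain ⟨t, h, rfl⟩ := hW.exists_eq_sum _ e
      rw [he, Preadditive.sum_comp, Functor.map_sum]
      refine Finset.sum_eq_zero fun i _ ↦ (trW_map_Q_eq_zero_iff P _).2 ?_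
      exact ⟨_, _, _, hGP (k i), (Category.assoc _ _ _).symm⟩
    have : IsIso (P.trW.Q.map s) := Localization.inverts P.trW.Q P.trW _ trW_s
    rw [← cancel_epi (P.trW.Q.map s), ← Functor.map_comp, hsa, comp_zero]

theorem IsCompactObj.exists_retract (hG : ∀ k, IsCompactObj.{w} (G k))
    (hdet : (ObjectProperty.ofObj G).IsDetecting) [∀ k X, Small.{w} (G k ⟶ X)]
    {P : ObjectProperty T} [P.IsTriangulated]
    (hP : ∀ X, P X → IsCompactObj.{w} X) (hGP : ∀ k, P (G k)) {c : T} (hc : IsCompactObj.{w} c) :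
    ∃ Y, P Y ∧ Nonempty (Retract c Y) := by
  obtain ⟨F, rfl, hF⟩ := exists_sequence_isCellAttachment.{w} G c
  have := hasCoproductsOfShape_of_small.{w} T ℕ
  have := isIso_one_sub_telescopeShift F hG hdet
    fun k n g ↦ ⟨n + 1, n.le_succ, (hF n).comp_eq_zero k g⟩
  obtain ⟨N, hN⟩ := exists_comp_map_eq_zero_of_isIso_one_sub hc (𝟙 (F.obj 0))
  obtain ⟨Y, i, r, hY, hir⟩ := (trW_map_Q_eq_zero_iff P _).1 <|
    trW_map_Q_eq_zero_of_comp_map_eq_zero hP hGP hF N.zero_le hc (𝟙 _) hN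
  exact ⟨Y, hY, ⟨i, r, hir⟩⟩

end CompactGenerators

section Coproducts

variable {A : Type u} [Ring A]

theorem exists_cofanTail_apply_eq_zero {ι : Type w} {M : ι → ModuleCat.{v} A} {c : Cofan M}
    (hc : IsColimit c) (x : c.pt) : ∃ s : Finset ι, cofanTail hc s x = 0 := by
  classical
  let N : Submodule A c.pt := ⨆ i, LinearMap.range (c.inj i).hom
  have hN : ModuleCat.ofHom N.mkQ = 0 := Cofan.IsColimit.hom_ext hc _ _ fun i ↦ by
    ext y
    exact (Submodule.Quotient.mk_eq_zero N).2 (Submodule.mem_iSup_of_mem i ⟨y, rfl⟩)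
  have hx : x ∈ N := (Submodule.Quotient.mk_eq_zero N).1 (congr(($hN).hom x))
  suffices ∃ s : Finset ι, ∀ t, s ⊆ t → cofanTail hc t x = 0 from
    this.imp fun s hs ↦ hs s subset_rfl
  induction hx using Submodule.iSup_induction' with
  | mem i y hy =>
    obtain ⟨y, rfl⟩ := hy
    refine ⟨{i}, fun t ht ↦ ?_⟩
    exact congr(($(inj_cofanTail_of_mem hc (ht (Finset.mem_singleton_self i)))).hom y)
  | zero => exact ⟨∅, by simp⟩
  | add x y _ _ hx hy =>
    obtain ⟨s, hs⟩ := hx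
    obtain ⟨t, ht⟩ := hy
    exact ⟨s ∪ t, fun r hr ↦ by
      rw [map_add, hs r (Finset.union_subset_left hr), ht r (Finset.union_subset_right hr),
        add_zero]⟩

variable {C : Type*} [Category* C] [Preadditive C] (F : C ⥤ ModuleCat.{v} A) [F.Additive]
  {ι : Type w}

theorem exists_map_cofanTail_apply_eq_zero [PreservesColimitsOfShape (Discrete ι) F] {X : ι → C}
    {c : Cofan X} (hc : IsColimit c) (x : F.obj c.pt) :
    ∃ s : Finset ι, F.map (cofanTail hc s) x = 0 := by
  have hFc := isColimitCofanMkObjOfIsColimit F X _ (hc.ofIsoColimit (Cofan.ext (Iso.refl _)))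
  have map_proj (i : ι) : cofanProj hFc i = F.map (cofanProj hc i) := by
    refine Cofan.IsColimit.hom_ext hFc _ _ fun j ↦ ?_
    obtain rfl | hji := eq_or_ne j i
    · exact (inj_cofanProj hFc j).trans (by simp [← F.map_comp, inj_cofanProj])
    · exact (inj_cofanProj_of_ne hFc hji).trans
        (by simp [← F.map_comp, inj_cofanProj_of_ne hc hji])
  obtain ⟨s, hs⟩ := exists_cofanTail_apply_eq_zero hFc x
  refine ⟨s, ?_⟩
  rwa [cofanTail, F.map_sub, F.map_sum, F.map_id, Finset.sum_congr rfl fun i _ ↦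
    (F.map_comp _ _).trans (by rw [← map_proj])]

theorem preservesColimitsOfShape_of_exists_map_cofanTail_apply_eq_zero [HasCoproductsOfShape ι C]
    [HasCoproductsOfShape ι (ModuleCat.{v} A)] (hF : ∀ (X : ι → C) (x : F.obj (∐ X)),
      ∃ s : Finset ι, F.map (cofanTail (coproductIsCoproduct X) s) x = 0) :
    PreservesColimitsOfShape (Discrete ι) F := by
  have (X : ι → C) : IsIso (sigmaComparison F X) := by
    let hX := coproductIsCoproduct X
    let hFX := coproductIsCoproduct fun i ↦ F.obj (X i)
    let q (s : Finset ι) : F.obj (∐ X) ⟶ ∐ fun i ↦ F.obj (X i) :=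
      ∑ i ∈ s, F.map (cofanProj hX i) ≫ Sigma.ι (fun i ↦ F.obj (X i)) i
    have q_comp (s : Finset ι) : q s ≫ sigmaComparison F X = 𝟙 _ - F.map (cofanTail hX s) := by
      simp [q, cofanTail, F.map_sub, F.map_sum, Preadditive.sum_comp, Cofan.inj, hX]
    have comparison_proj (i : ι) : sigmaComparison F X ≫ F.map (cofanProj hX i) =
        cofanProj hFX i := by
      refine Cofan.IsColimit.hom_ext hFX _ _ fun j ↦ (ι_comp_sigmaComparison_assoc F X j _).trans ?_
      obtain rfl | hji := eq_or_ne j i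
      · rw [inj_cofanProj hFX, ← F.map_comp, ← F.map_id]
        exact congrArg F.map (inj_cofanProj hX j)
      · rw [inj_cofanProj_of_ne hFX hji, ← F.map_comp, ← F.map_zero]
        exact congrArg F.map (inj_cofanProj_of_ne hX hji)
    have comp_q (s : Finset ι) : sigmaComparison F X ≫ q s = 𝟙 _ - cofanTail hFX s := by
      simp only [q, cofanTail, Preadditive.comp_sum, reassoc_of% comparison_proj, sub_sub_cancel]
      rfl
    rw [ConcreteCategory.isIso_iff_bijective, Function.Bijective, injective_iff_map_eq_zero]
    refine ⟨fun y hy ↦ ?_, fun x ↦ ?_⟩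
    · obtain ⟨s, hs⟩ := exists_cofanTail_apply_eq_zero hFX y
      have := congr(($(comp_q s)).hom y)
      simpa [hy, hs] using this.symm
    · obtain ⟨s, hs⟩ := hF X x
      have := congr(($(q_comp s)).hom x)
      exact ⟨q s x, this.trans (sub_eq_self.2 hs)⟩
  have (X : ι → C) : PreservesColimit (Discrete.functor X) F :=
    PreservesCoproduct.of_iso_comparison F X
  exact preservesColimitsOfShape_of_discrete F

instance preservesColimitsOfShape_homologyFunctor {κ : Type*} (c : ComplexShape κ) (n : κ)
    (ι : Type v) : PreservesColimitsOfShape (Discrete ι)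
      (HomologicalComplex.homologyFunctor (ModuleCat.{v} A) c n) := by
  refine preservesColimitsOfShape_of_exists_map_cofanTail_apply_eq_zero _ fun X z ↦ ?_
  let t := cofanTail (coproductIsCoproduct X)
  obtain ⟨y, rfl⟩ := (ModuleCat.epi_iff_surjective ((∐ X).homologyπ n)).1 inferInstance z
  obtain ⟨s, hs⟩ := exists_map_cofanTail_apply_eq_zero (HomologicalComplex.eval _ c n)
    (coproductIsCoproduct X) ((∐ X).iCycles n y)
  have hy : HomologicalComplex.cyclesMap (t s) n y = 0 :=
    (ModuleCat.mono_iff_injective ((∐ X).iCycles n)).1 inferInstance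
      ((congr(($(HomologicalComplex.cyclesMap_i (t s) n)).hom y)).trans
        (hs.trans (map_zero _).symm))
  refine ⟨s, (congr(($(HomologicalComplex.homologyπ_naturality (t s) n)).hom y)).trans ?_⟩
  exact (congrArg ((∐ X).homologyπ n).hom hy).trans (map_zero _)

instance isStableUnderCoproductsOfShape_quasiIso {κ : Type*} (c : ComplexShape κ) (ι : Type v) :
    (HomologicalComplex.quasiIso (ModuleCat.{v} A) c).IsStableUnderCoproductsOfShape ι where
  condition X₁ X₂ c₁ c₂ h₁ h₂ f hf φ hφ := by
    rw [HomologicalComplex.mem_quasiIso_iff, quasiIso_iff]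
    intro n
    rw [quasiIsoAt_iff_isIso_homologyMap]
    let H := HomologicalComplex.homologyFunctor (ModuleCat.{v} A) c n
    refine MorphismProperty.IsStableUnderColimitsOfShape.condition
      (W := MorphismProperty.isomorphisms _) _ _ _ _ (isColimitOfPreserves H h₁)
      (isColimitOfPreserves H h₂) (Functor.whiskerRight f H) (fun j ↦ ?_) (H.map φ) fun j ↦ ?_
    · have : QuasiIso (f.app j) := hf j
      exact inferInstanceAs (IsIso (HomologicalComplex.homologyMap (f.app j) n))
    · exact (H.map_comp _ _).symm.trans ((congrArg H.map (hφ j)).trans (H.map_comp _ _))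

end Coproducts

section DerivedCoproducts

variable {A : Type u} [Ring A] [HasDerivedCategory.{w'} (ModuleCat.{v} A)] {ι : Type v}

section

variable (X : ι → CochainComplex (ModuleCat.{v} A) ℤ)

theorem exists_Q_map_ι_comp_eq {E : DerivedCategory (ModuleCat.{v} A)}
    (φ : ∀ i, DerivedCategory.Q.obj (X i) ⟶ E) :
    ∃ g : DerivedCategory.Q.obj (∐ X) ⟶ E, ∀ i, DerivedCategory.Q.map (Sigma.ι X i) ≫ g = φ i := by
  let e := DerivedCategory.Q.objObjPreimageIso E
  choose X' s hs f hf using fun i ↦ DerivedCategory.right_fac (φ i ≫ e.inv)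
  have hs' : IsIso (DerivedCategory.Q.map (Limits.Sigma.map s)) := by
    simp only [DerivedCategory.isIso_Q_map_iff_quasiIso] at hs ⊢
    exact (HomologicalComplex.quasiIso _ _).colimMap _ fun i ↦ hs i.as
  refine ⟨inv (DerivedCategory.Q.map (Limits.Sigma.map s)) ≫ DerivedCategory.Q.map (Sigma.desc f) ≫
    e.hom, fun i ↦ ?_⟩
  have hi : inv (DerivedCategory.Q.map (s i)) ≫ DerivedCategory.Q.map (Sigma.ι X' i) =
      DerivedCategory.Q.map (Sigma.ι X i) ≫ inv (DerivedCategory.Q.map (Limits.Sigma.map s)) := by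
    rw [IsIso.inv_comp_eq, ← Category.assoc, IsIso.eq_comp_inv, ← Functor.map_comp,
      ← Functor.map_comp, Sigma.ι_map]
  rw [← reassoc_of% hi, ← Functor.map_comp_assoc, Sigma.ι_desc, ← Category.assoc, ← hf,
    Category.assoc, e.inv_hom_id, Category.comp_id]

instance preservesColimitsOfShape_Q_comp_homologyFunctor (n : ℤ) :
    PreservesColimitsOfShape (Discrete ι)
      (DerivedCategory.Q ⋙ DerivedCategory.homologyFunctor (ModuleCat.{v} A) n) :=
  preservesColimitsOfShape_of_natIso (DerivedCategory.homologyFunctorFactors _ n).symm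

theorem isIso_of_Q_map_ι_comp_eq
    (e : DerivedCategory.Q.obj (∐ X) ⟶ DerivedCategory.Q.obj (∐ X))
    (he : ∀ i, DerivedCategory.Q.map (Sigma.ι X i) ≫ e = DerivedCategory.Q.map (Sigma.ι X i)) :
    IsIso e := by
  rw [DerivedCategory.isIso_iff]
  intro n
  suffices (DerivedCategory.homologyFunctor _ n).map e = 𝟙 _ from this ▸ inferInstance
  refine Cofan.IsColimit.hom_ext (isColimitCofanMkObjOfIsColimit (DerivedCategory.Q ⋙
    DerivedCategory.homologyFunctor (ModuleCat.{v} A) n) X _ (coproductIsCoproduct X)) _ _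
      fun i ↦ ?_
  exact ((Functor.map_comp _ _ _).symm.trans (congrArg _ (he i))).trans (Category.comp_id _).symm

theorem Q_hom_ext {E : DerivedCategory (ModuleCat.{v} A)}
    {f g : DerivedCategory.Q.obj (∐ X) ⟶ E}
    (h : ∀ i, DerivedCategory.Q.map (Sigma.ι X i) ≫ f = DerivedCategory.Q.map (Sigma.ι X i) ≫ g) :
    f = g := by
  obtain ⟨Z, k, δ, hT⟩ := distinguished_cocone_triangle₁ (f - g)
  choose k' hk' using fun i ↦ show ∃ k', DerivedCategory.Q.map (Sigma.ι X i) = k' ≫ k from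
    Triangle.coyoneda_exact₂ _ hT _ (by
      change _ ≫ (f - g) = 0
      rw [Preadditive.comp_sub, h, sub_self])
  obtain ⟨r, hr⟩ := exists_Q_map_ι_comp_eq X k'
  have : IsIso (r ≫ k) := isIso_of_Q_map_ι_comp_eq X _ fun i ↦ by
    rw [reassoc_of% hr, ← hk']
  rw [← sub_eq_zero, ← cancel_epi (r ≫ k), Category.assoc, comp_zero]
  exact (congrArg (r ≫ ·) (comp_distTriang_mor_zero₁₂ _ hT)).trans comp_zero

end

instance preservesColimitsOfShape_Q : PreservesColimitsOfShape (Discrete ι)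
    (DerivedCategory.Q : CochainComplex (ModuleCat.{v} A) ℤ ⥤ _) := by
  have (X : ι → CochainComplex (ModuleCat.{v} A) ℤ) :
      PreservesColimit (Discrete.functor X) DerivedCategory.Q := by
    refine preservesColimit_of_preserves_colimit_cocone (coproductIsCoproduct X)
      ((isColimitMapCoconeCofanMkEquiv _ _ _).symm (Cofan.IsColimit.mk _
        (fun c ↦ (exists_Q_map_ι_comp_eq X c.inj).choose)
        (fun c ↦ (exists_Q_map_ι_comp_eq X c.inj).choose_spec) fun c m hm ↦ ?_))
    exact Q_hom_ext X fun i ↦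
      (hm i).trans ((exists_Q_map_ι_comp_eq X c.inj).choose_spec i).symm
  exact preservesColimitsOfShape_of_discrete _

theorem exists_iso_functor_comp_Q (F : Discrete ι ⥤ DerivedCategory (ModuleCat.{v} A)) :
    ∃ K : Discrete ι ⥤ CochainComplex (ModuleCat.{v} A) ℤ,
      Nonempty (K ⋙ DerivedCategory.Q ≅ F) :=
  ⟨Discrete.functor fun i ↦ DerivedCategory.Q.objPreimage (F.obj ⟨i⟩),
    ⟨Discrete.natIso fun i ↦ DerivedCategory.Q.objObjPreimageIso (F.obj i)⟩⟩

instance hasColimitsOfShape_derivedCategory :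
    HasColimitsOfShape (Discrete ι) (DerivedCategory (ModuleCat.{v} A)) where
  has_colimit F := by
    obtain ⟨K, ⟨e⟩⟩ := exists_iso_functor_comp_Q F
    exact hasColimit_of_iso e.symm

instance preservesColimitsOfShape_derivedHomologyFunctor (n : ℤ) :
    PreservesColimitsOfShape (Discrete ι)
      (DerivedCategory.homologyFunctor (ModuleCat.{v} A) n) where
  preservesColimit {F} := by
    obtain ⟨K, ⟨e⟩⟩ := exists_iso_functor_comp_Q F
    have := preservesColimit_of_preserves_colimit_cocone
      (isColimitOfPreserves DerivedCategory.Q (colimit.isColimit K))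
      (isColimitOfPreserves (DerivedCategory.Q ⋙
        DerivedCategory.homologyFunctor (ModuleCat.{v} A) n) (colimit.isColimit K))
    exact preservesColimit_of_iso_diagram _ e

end DerivedCoproducts

section SingleProjective

variable {C : Type u} [Category.{v} C] [Abelian C]

theorem exists_homologyMap_single_eq (P : C) [Projective P] (k : ℤ) (K : CochainComplex C ℤ)
    (β : ((HomologicalComplex.single C (.up ℤ) k).obj P).homology k ⟶ K.homology k) :
    ∃ f : (HomologicalComplex.single C (.up ℤ) k).obj P ⟶ K,
      HomologicalComplex.homologyMap f k = β := by
  let e := HomologicalComplex.singleObjHomologySelfIso (.up ℤ) k P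
  let e' := HomologicalComplex.singleObjCyclesSelfIso (.up ℤ) k P
  let z := Projective.factorThru (e.inv ≫ β) (K.homologyπ k)
  have hz : z ≫ K.homologyπ k = e.inv ≫ β := Projective.factorThru_comp _ _
  let f := HomologicalComplex.mkHomFromSingle (z ≫ K.iCycles k) fun i _ ↦ by simp
  have hf : e'.inv ≫ HomologicalComplex.cyclesMap f k = z := by
    rw [← cancel_mono (K.iCycles k)]
    simp [f, e']
  have he : e'.inv ≫ HomologicalComplex.homologyπ _ k = e.inv :=
    HomologicalComplex.singleObjCyclesSelfIso_inv_homologyπ ..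
  refine ⟨f, ?_⟩
  rw [← cancel_epi e.inv, ← hz, ← hf, ← he, Category.assoc, Category.assoc,
    HomologicalComplex.homologyπ_naturality]

variable [HasDerivedCategory.{w} C]

theorem exists_homologyFunctor_map_Q_map_eq (P : C) [Projective P] (k : ℤ)
    (K : CochainComplex C ℤ)
    (β : (DerivedCategory.homologyFunctor C k).obj
        (DerivedCategory.Q.obj ((HomologicalComplex.single C (.up ℤ) k).obj P)) ⟶
      (DerivedCategory.homologyFunctor C k).obj (DerivedCategory.Q.obj K)) :
    ∃ f : (HomologicalComplex.single C (.up ℤ) k).obj P ⟶ K,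
      (DerivedCategory.homologyFunctor C k).map (DerivedCategory.Q.map f) = β := by
  let τ := DerivedCategory.homologyFunctorFactors C k
  obtain ⟨f, hf⟩ := exists_homologyMap_single_eq P k K (τ.inv.app _ ≫ β ≫ τ.hom.app _)
  refine ⟨f, ?_⟩
  rw [← cancel_mono (τ.hom.app K)]
  refine (DerivedCategory.homologyFunctorFactors_hom_naturality f k).trans ?_
  rw [hf]
  exact τ.hom_inv_id_app_assoc _ _

theorem surjective_homologyFunctor_map_singleFunctor_obj (P : C) [Projective P] (k : ℤ)
    (X : DerivedCategory C) :
    Function.Surjective fun a : (DerivedCategory.singleFunctor C k).obj P ⟶ X ↦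
      (DerivedCategory.homologyFunctor C k).map a := by
  intro β
  let e := DerivedCategory.Q.objObjPreimageIso X
  obtain ⟨f, hf⟩ := exists_homologyFunctor_map_Q_map_eq P k _
    (β ≫ (DerivedCategory.homologyFunctor C k).map e.inv)
  refine ⟨DerivedCategory.Q.map f ≫ e.hom, ?_⟩
  have hβ : (β ≫ (DerivedCategory.homologyFunctor C k).map e.inv) ≫
      (DerivedCategory.homologyFunctor C k).map e.hom = β := by
    rw [Category.assoc, ← Functor.map_comp, e.inv_hom_id, CategoryTheory.Functor.map_id,
      Category.comp_id]
  exact (Functor.map_comp _ _ _).trans ((congrArg (· ≫ _) hf).trans hβ)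

theorem isZero_homologyFunctor_obj_singleFunctor_obj (P : C) {k n : ℤ} (h : n ≠ k) :
    IsZero ((DerivedCategory.homologyFunctor C n).obj
      ((DerivedCategory.singleFunctor C k).obj P)) :=
  (HomologicalComplex.isZero_single_obj_homology (.up ℤ) k P n h).of_iso
    ((DerivedCategory.homologyFunctorFactors C n).app
      ((CochainComplex.singleFunctor C k).obj P))

theorem injective_homologyFunctor_map_singleFunctor_obj (P : C) [Projective P] (k : ℤ)
    (X : DerivedCategory C) :
    Function.Injective fun a : (DerivedCategory.singleFunctor C k).obj P ⟶ X ↦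
      (DerivedCategory.homologyFunctor C k).map a := by
  refine (injective_iff_map_eq_zero
    (DerivedCategory.homologyFunctor C k).mapAddHom).2 fun a ha ↦ ?_
  obtain ⟨F, f, δ, hT⟩ := distinguished_cocone_triangle₁ a
  have : Epi ((DerivedCategory.homologyFunctor C k).map f) :=
    (DerivedCategory.HomologySequence.exact₂ _ hT k).epi_f ha
  let e : (DerivedCategory.homologyFunctor C k).obj ((DerivedCategory.singleFunctor C k).obj P) ≅
      P := (DerivedCategory.homologyFunctorFactors C k).app _ ≪≫
    HomologicalComplex.singleObjHomologySelfIso (.up ℤ) k P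
  have := Projective.of_iso e.symm inferInstance
  obtain ⟨b, hb : (DerivedCategory.homologyFunctor C k).map b = _⟩ :=
    surjective_homologyFunctor_map_singleFunctor_obj P k F
      (Projective.factorThru (𝟙 _) ((DerivedCategory.homologyFunctor C k).map f))
  have : IsIso (b ≫ f) := by
    refine (DerivedCategory.isIso_iff _ _).2 fun n ↦ ?_
    obtain rfl | hn := eq_or_ne n k
    · rw [Functor.map_comp, hb, Projective.factorThru_comp]
      infer_instance
    · exact isIso_of_source_target_iso_zero _
        (isZero_homologyFunctor_obj_singleFunctor_obj P hn).isoZero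
        (isZero_homologyFunctor_obj_singleFunctor_obj P hn).isoZero
  rw [← cancel_epi (b ≫ f), Category.assoc, comp_zero]
  exact (congrArg (b ≫ ·) (comp_distTriang_mor_zero₁₂ _ hT)).trans comp_zero

end SingleProjective

section CompactGenerator

variable {A : Type u} [Ring A] [HasDerivedCategory.{w} (ModuleCat.{u} A)]

variable (A) in
/-- The module `A` in degree `k`. As `k` varies, these complexes form a set of compact generators of
the derived category of `A`. -/
noncomputable abbrev singleSelf (k : ℤ) : DerivedCategory (ModuleCat.{u} A) :=
  (DerivedCategory.singleFunctor _ k).obj (.of A A)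

variable (A) in
/-- The homology of `singleSelf A k` in degree `k`, identified with `A`; it is used to define
`fundamentalClass`. -/
noncomputable def homologySingleSelfIso (k : ℤ) :
    (DerivedCategory.homologyFunctor (ModuleCat.{u} A) k).obj (singleSelf A k) ≅ .of A A :=
  (DerivedCategory.homologyFunctorFactors _ k).app _ ≪≫
    HomologicalComplex.singleObjHomologySelfIso (.up ℤ) k _

variable (A) in
/-- The class of `1`, by which `singleSelf A k` represents homology in degree `k`. -/
noncomputable def fundamentalClass (k : ℤ) :
    (DerivedCategory.homologyFunctor (ModuleCat.{u} A) k).obj (singleSelf A k) :=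
  (homologySingleSelfIso A k).inv (1 : A)

theorem bijective_homologyFunctor_map_fundamentalClass (k : ℤ)
    (X : DerivedCategory (ModuleCat.{u} A)) :
    Function.Bijective fun a : singleSelf A k ⟶ X ↦
      (DerivedCategory.homologyFunctor (ModuleCat.{u} A) k).map a (fundamentalClass A k) := by
  let e := homologySingleSelfIso A k
  constructor
  · intro a b hab
    refine injective_homologyFunctor_map_singleFunctor_obj _ k X ?_
    change (DerivedCategory.homologyFunctor (ModuleCat.{u} A) k).map a =
      (DerivedCategory.homologyFunctor (ModuleCat.{u} A) k).map b
    rw [← cancel_epi e.inv]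
    ext
    exact hab
  · intro z
    obtain ⟨a, ha⟩ := surjective_homologyFunctor_map_singleFunctor_obj (.of A A) k X
      (e.hom ≫ ModuleCat.ofHom (LinearMap.toSpanSingleton A _ z))
    refine ⟨a, (congr($(ha) (fundamentalClass A k))).trans ?_⟩
    have he : e.hom (fundamentalClass A k) = (1 : A) := congr(($(e.inv_hom_id)).hom (1 : A))
    rw [ModuleCat.comp_apply, he]
    exact one_smul A z

theorem isCompactObj_singleSelf (k : ℤ) : IsCompactObj.{u} (singleSelf A k) := by
  refine (isCompactObj_iff_exists_comp_cofanTail _).2 fun ι f c hc g ↦ ?_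
  obtain ⟨s, hs⟩ := exists_map_cofanTail_apply_eq_zero
    (DerivedCategory.homologyFunctor (ModuleCat.{u} A) k) hc
    ((DerivedCategory.homologyFunctor (ModuleCat.{u} A) k).map g (fundamentalClass A k))
  refine ⟨s, (bijective_homologyFunctor_map_fundamentalClass k _).1 ?_⟩
  simpa using hs

instance small_singleSelf_hom (k : ℤ) (X : DerivedCategory (ModuleCat.{u} A)) :
    Small.{u} (singleSelf A k ⟶ X) :=
  small_of_injective (bijective_homologyFunctor_map_fundamentalClass k X).1

theorem isDetecting_singleSelf :
    (ObjectProperty.ofObj fun k : ULift.{u} ℤ ↦ singleSelf A k.down).IsDetecting := by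
  intro X Y f hf
  refine (DerivedCategory.isIso_iff _ _).2 fun k ↦ ?_
  rw [ConcreteCategory.isIso_iff_bijective]
  have hX := bijective_homologyFunctor_map_fundamentalClass k X
  have hY := bijective_homologyFunctor_map_fundamentalClass k Y
  have hf' : Function.Bijective fun a : singleSelf A k ⟶ X ↦ a ≫ f :=
    (Function.bijective_iff_existsUnique _).2 (hf _ (ObjectProperty.ofObj_apply _ (ULift.up k)))
  have h := hY.comp hf'
  refine (Function.Bijective.of_comp_iff _ hX).1 ?_
  convert h using 1
  ext a
  simp

theorem IsLocalizingSub.mem_of_singleSelf_mem {L : Set (DerivedCategory (ModuleCat.{u} A))}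
    (hL : IsLocalizingSub.{u} L) (h : singleSelf A 0 ∈ L) (X : DerivedCategory (ModuleCat.{u} A)) :
    X ∈ L := by
  refine hL.mem_of_isDetecting (G := fun k : ULift.{u} ℤ ↦ singleSelf A k.down)
    (fun k ↦ isCompactObj_singleSelf k.down) isDetecting_singleSelf (fun k ↦ ?_) X
  have e := ((DerivedCategory.singleFunctors (ModuleCat.{u} A)).shiftIso (-k.down) k.down 0
    (neg_add_cancel _)).app (.of A A)
  exact hL.mem_of_iso e (hL.shift_mem _ h)

end CompactGenerator

section ExactFunctors

variable {A : Type u} [Ring A] {B : Type u} [Ring B] [HasDerivedCategory.{w} (ModuleCat.{u} B)]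
  (E : ModuleCat.{u} A ⥤ CochainComplex (ModuleCat.{u} B) ℤ)
  [∀ ι : Type u, PreservesColimitsOfShape (Discrete ι) E]
  (P : ObjectProperty (DerivedCategory (ModuleCat.{u} B))) [P.IsTriangulated]
  [∀ ι : Type u, P.IsClosedUnderColimitsOfShape (Discrete ι)]

theorem exists_trW_Q_obj_hom_shift [E.PreservesZeroMorphisms] [PreservesFiniteLimits E]
    [PreservesFiniteColimits E] (hA : P (DerivedCategory.Q.obj (E.obj (.of A A))))
    (N : ModuleCat.{u} A) :
    ∃ (N' : ModuleCat.{u} A)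
      (t : DerivedCategory.Q.obj (E.obj N) ⟶ (DerivedCategory.Q.obj (E.obj N'))⟦(1 : ℤ)⟧),
      P.trW t := by
  let F : N → ModuleCat.{u} A := fun _ ↦ .of A A
  let p : ∐ F ⟶ N := Sigma.desc fun x ↦ ModuleCat.ofHom (LinearMap.toSpanSingleton A N x)
  have : Epi p := by
    refine (ModuleCat.epi_iff_surjective _).2 fun x ↦ ⟨Sigma.ι F x (1 : A), ?_⟩
    have h : Sigma.ι F x ≫ p = _ := Sigma.ι_desc _ _
    exact congr(($h).hom (1 : A)).trans (one_smul A x)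
  let S : ShortComplex (ModuleCat.{u} A) := .mk (kernel.ι p) p (kernel.condition p)
  have hS : S.ShortExact := { exact := ShortComplex.exact_kernel p }
  have hF : P (DerivedCategory.Q.obj (E.obj (∐ F))) :=
    P.prop_of_isColimit (isColimitOfPreserves (E ⋙ DerivedCategory.Q) (coproductIsCoproduct F))
      fun _ ↦ hA
  have hT := DerivedCategory.triangleOfSES_distinguished (hS.map_of_exact E)
  exact ⟨_, (DerivedCategory.triangleOfSES (hS.map_of_exact E)).mor₃,
    .mk _ (rot_of_distTriang _ (rot_of_distTriang _ hT)) (P.le_shift 1 _ hF)⟩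

variable {E} in
-- Modulo `L` an object `E.obj N` is isomorphic to the shifts of its iterated syzygies, which tend
-- to `-∞`.
theorem IsLocalizingSub.Q_obj_mem [E.PreservesZeroMorphisms] [PreservesFiniteLimits E]
    [PreservesFiniteColimits E] {b : ℤ} (hE : ∀ N, (DerivedCategory.Q.obj (E.obj N)).IsLE b)
    {L : Set (DerivedCategory (ModuleCat.{u} B))} (hL : IsLocalizingSub.{u} L)
    (hA : DerivedCategory.Q.obj (E.obj (.of A A)) ∈ L) (N : ModuleCat.{u} A) :
    DerivedCategory.Q.obj (E.obj N) ∈ L := by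
  choose Ω t ht using exists_trW_Q_obj_hom_shift E hL.toObjectProperty hA
  let syzygy : ℕ → ModuleCat.{u} A := Nat.rec N fun _ ↦ Ω
  let X (n : ℕ) : DerivedCategory (ModuleCat.{u} B) :=
    (DerivedCategory.Q.obj (E.obj (syzygy n)))⟦(n : ℤ)⟧
  let next (n : ℕ) : X n ⟶ X (n + 1) := (t (syzygy n))⟦(n : ℤ)⟧' ≫
    (shiftFunctorAdd' _ 1 (n : ℤ) (n + 1 : ℕ) (by lia)).inv.app _
  have hX : (Functor.ofSequence next).obj 0 ∈ L := by
    refine prop_obj_zero_of_forall_exists_comp_map_eq_zero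
      (G := fun k : ULift.{u} ℤ ↦ singleSelf B k.down)
      (fun k ↦ isCompactObj_singleSelf k.down) isDetecting_singleSelf hL.toObjectProperty _
      (fun n ↦ ?_) fun k n g ↦ ?_
    · rw [Functor.ofSequence_map_homOfLE_succ]
      exact MorphismProperty.comp_mem _ _ _ (ObjectProperty.trW.shift (ht _) n)
        (MorphismProperty.of_isIso _ _)
    · let m := n + (b - k.down + 1).toNat
      refine ⟨m, Nat.le_add_right _ _, ?_⟩
      have := hE (syzygy m)
      have hXm : (X m).IsLE (b - m) :=
        DerivedCategory.TStructure.t.isLE_shift _ b (m : ℤ) (b - m) (by lia)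
      have := ModuleCat.subsingleton_of_isZero ((X m).isZero_of_isLE (b - m) k.down (by lia))
      exact (bijective_homologyFunctor_map_fundamentalClass k.down (X m)).1 (Subsingleton.elim _ _)
  exact hL.mem_of_iso ((shiftFunctorZero _ ℤ).app _) hX

end ExactFunctors

section SingleModules

variable {R : Type u} [CommRing R] [HasDerivedCategory.{w'} (ModuleCat.{u} R)]

theorem singleFunctor_map_smul_id (r : R) (M : ModuleCat.{u} R) :
    (DerivedCategory.singleFunctor (ModuleCat.{u} R) 0).map (r • 𝟙 M) = r • 𝟙 (smod R M) := by
  rw [CategoryTheory.Functor.map_smul, CategoryTheory.Functor.map_id]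
  rfl

theorem smul_id_smod_quotient_eq_zero {I : Ideal R} {r : R} (hr : r ∈ I) :
    r • 𝟙 (smod R (.of R (R ⧸ I))) = 0 := by
  have hr₀ : r • 𝟙 (ModuleCat.of R (R ⧸ I)) = 0 := ModuleCat.hom_ext (LinearMap.ext
    (Module.mem_annihilator.1 (Ideal.annihilator_quotient (I := I) ▸ hr)))
  rw [← singleFunctor_map_smul_id, hr₀]
  exact Functor.map_zero _ _ _

variable {L : Set (DerivedCategory (ModuleCat.{u} R))} (hL : IsLocalizingSub.{u} L)

include hL

theorem IsLocalizingSub.smod_mem_of_shortExact {S : ShortComplex (ModuleCat.{u} R)}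
    (hS : S.ShortExact) (h₁ : smod R S.X₁ ∈ L) (h₃ : smod R S.X₃ ∈ L) : smod R S.X₂ ∈ L :=
  hL.toObjectProperty.ext_of_isTriangulatedClosed₂ _ hS.singleTriangle_distinguished h₁ h₃

theorem IsLocalizingSub.smod_restrictScalars_mem {A : Type u} [CommRing A] (f : R →+* A)
    (hA : smod R ((ModuleCat.restrictScalars f).obj (.of A A)) ∈ L) (N : ModuleCat.{u} A) :
    smod R ((ModuleCat.restrictScalars f).obj N) ∈ L := by
  have := comp_preservesFiniteLimits (ModuleCat.restrictScalars.{u} f)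
    (HomologicalComplex.single (ModuleCat.{u} R) (.up ℤ) 0)
  have := comp_preservesFiniteColimits (ModuleCat.restrictScalars.{u} f)
    (HomologicalComplex.single (ModuleCat.{u} R) (.up ℤ) 0)
  exact hL.Q_obj_mem (E := ModuleCat.restrictScalars f ⋙
      HomologicalComplex.single (ModuleCat.{u} R) (.up ℤ) 0) (b := 0)
    (fun N ↦ inferInstanceAs (((DerivedCategory.singleFunctor _ 0).obj
      ((ModuleCat.restrictScalars f).obj N)).IsLE 0)) hA N

theorem IsLocalizingSub.smod_mem_of_quotient_mem {J : Ideal R}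
    (hJ : smod R (.of R (R ⧸ J)) ∈ L) (M : ModuleCat.{u} R) (hM : J ≤ Module.annihilator R M) :
    smod R M ∈ L := by
  let : Module (R ⧸ J) M := ((Module.isTorsionBySet_iff_subset_annihilator R M).2 hM).module
  let f := Ideal.Quotient.mk J
  let N := (ModuleCat.restrictScalars f).obj (.of (R ⧸ J) M)
  let toM : N →ₗ[R] M := { AddMonoidHom.id M with map_smul' := fun _ _ ↦ rfl }
  let e : N ≅ M := (LinearEquiv.ofBijective toM Function.bijective_id).toModuleIso
  exact hL.mem_of_iso ((DerivedCategory.singleFunctor _ 0).mapIso e)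
    (hL.smod_restrictScalars_mem f hJ (.of (R ⧸ J) M))

end SingleModules

section Koszul

variable {R : Type u} [CommRing R]

theorem annihilator_sup_span_le_annihilator_kernel (s : R) (M : ModuleCat.{u} R) :
    Module.annihilator R M ⊔ Ideal.span {s} ≤ Module.annihilator R (kernel (s • 𝟙 M) :) := by
  have hι : Function.Injective (kernel.ι (s • 𝟙 M)).hom :=
    (ModuleCat.mono_iff_injective _).1 inferInstance
  refine sup_le (LinearMap.annihilator_le_of_injective _ hι) ?_
  refine (Ideal.span_singleton_le_iff_mem _).2 (Module.mem_annihilator.2 fun x ↦ hι ?_)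
  rw [map_smul, map_zero]
  exact congr(($(kernel.condition (s • 𝟙 M))).hom x)

theorem annihilator_sup_span_le_annihilator_cokernel (s : R) (M : ModuleCat.{u} R) :
    Module.annihilator R M ⊔ Ideal.span {s} ≤ Module.annihilator R (cokernel (s • 𝟙 M) :) := by
  have hπ : Function.Surjective (cokernel.π (s • 𝟙 M)).hom :=
    (ModuleCat.epi_iff_surjective _).1 inferInstance
  refine sup_le (LinearMap.annihilator_le_of_surjective _ hπ) ?_
  refine (Ideal.span_singleton_le_iff_mem _).2 (Module.mem_annihilator.2 (hπ.forall.2 fun x ↦ ?_))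
  rw [← map_smul]
  exact congr(($(cokernel.condition (s • 𝟙 M))).hom x)

variable [HasDerivedCategory.{w'} (ModuleCat.{u} R)]
  {L : Set (DerivedCategory (ModuleCat.{u} R))} (hL : IsLocalizingSub.{u} L)

theorem exists_koszulD_cons_triangle (f : R) (l : List R) :
    ∃ (g : koszulD R l ⟶ koszulD R (f :: l)) (h : koszulD R (f :: l) ⟶ (koszulD R l)⟦(1 : ℤ)⟧),
      Triangle.mk (f • 𝟙 (koszulD R l)) g h ∈ distTriang _ := by
  have hf : DerivedCategory.Q.map (f • 𝟙 (koszulCx R l)) = f • 𝟙 (koszulD R l) := by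
    rw [CategoryTheory.Functor.map_smul, CategoryTheory.Functor.map_id]
    rfl
  rw [← hf]
  exact ⟨_, _, DerivedCategory.mappingCone_triangle_distinguished (f • 𝟙 (koszulCx R l))⟩

theorem isCompactObj_koszulD (l : List R) : IsCompactObj.{u} (koszulD R l) := by
  induction l with
  | nil => exact isCompactObj_singleSelf 0
  | cons f l ih =>
    obtain ⟨g, h, hT⟩ := exists_koszulD_cons_triangle f l
    exact IsCompactObj.obj₂ (rot_of_distTriang _ hT) ih (ih.shift 1)

include hL

theorem IsLocalizingSub.koszulD_mem_iff (l : List R) :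
    koszulD R l ∈ L ↔ listColon hL.toObjectProperty l (singleSelf R 0) := by
  induction l generalizing L with
  | nil => rfl
  | cons f l ih =>
    obtain ⟨g, h, hT⟩ := exists_koszulD_cons_triangle f l
    exact (hL.toObjectProperty.trW_iff_of_distinguished _ hT).symm.trans
      (ih (isLocalizingSub_setOf (colon hL.toObjectProperty f)))

theorem IsLocalizingSub.mem_of_koszulD_mem {l : List R} (hl : koszulD R l ∈ L)
    {X : DerivedCategory (ModuleCat.{u} R)} (hX : ∀ r ∈ l, ∃ n, r ^ n • 𝟙 X = 0) : X ∈ L :=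
  mem_of_listColon_of_nilpotent hL l hX
    ((isLocalizingSub_listColon hL l).mem_of_singleSelf_mem ((hL.koszulD_mem_iff l).1 hl) X)

theorem IsLocalizingSub.trW_singleFunctor_map {M N : ModuleCat.{u} R} (g : M ⟶ N)
    (hker : smod R (kernel g) ∈ L) (hcoker : smod R (cokernel g) ∈ L) :
    hL.toObjectProperty.trW ((DerivedCategory.singleFunctor (ModuleCat.{u} R) 0).map g) := by
  let S₁ : ShortComplex (ModuleCat.{u} R) :=
    .mk (kernel.ι g) (Abelian.factorThruImage g) (by simp [← cancel_mono (Abelian.image.ι g)])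
  let S₂ : ShortComplex (ModuleCat.{u} R) :=
    .mk (Abelian.image.ι g) (cokernel.π g) (kernel.condition _)
  have hS₁ : S₁.ShortExact :=
    { exact := S₁.exact_of_f_is_kernel
        (isKernelOfComp (Abelian.image.ι g) g (kernelIsKernel g) _ (Abelian.image.fac g)) }
  have hS₂ : S₂.ShortExact := { exact := ShortComplex.exact_kernel (cokernel.π g) }
  rw [← Abelian.image.fac g, Functor.map_comp]
  exact hL.toObjectProperty.trW.comp_mem _ _
    (.mk _ (rot_of_distTriang _ hS₁.singleTriangle_distinguished) (hL.shift_mem 1 hker))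
    (.mk _ hS₂.singleTriangle_distinguished hcoker)

theorem IsLocalizingSub.colon_smod {s : R} {M : ModuleCat.{u} R}
    (h : ∀ N : ModuleCat.{u} R,
      Module.annihilator R M ⊔ Ideal.span {s} ≤ Module.annihilator R N → smod R N ∈ L) :
    colon hL.toObjectProperty s (smod R M) := by
  change hL.toObjectProperty.trW _
  rw [← singleFunctor_map_smul_id]
  exact hL.trW_singleFunctor_map _ (h _ (annihilator_sup_span_le_annihilator_kernel s M))
    (h _ (annihilator_sup_span_le_annihilator_cokernel s M))

theorem IsLocalizingSub.listColon_smod {l : List R}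
    (h : ∀ M : ModuleCat.{u} R,
      Ideal.span {r | r ∈ l} ≤ Module.annihilator R M → smod R M ∈ L)
    (M : ModuleCat.{u} R) : listColon hL.toObjectProperty l (smod R M) := by
  induction l generalizing L with
  | nil => exact h M (Ideal.span_le.2 fun _ hr ↦ absurd hr List.not_mem_nil)
  | cons f l ih =>
    refine ih (isLocalizingSub_setOf (colon hL.toObjectProperty f)) fun N hN ↦
      hL.colon_smod fun N' hN' ↦ h N' (Ideal.span_le.2 fun r hr ↦ hN' ?_)
    obtain rfl | hr := List.mem_cons.1 hr
    · exact Ideal.mem_sup_right (Ideal.mem_span_singleton_self r)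
    · exact Ideal.mem_sup_left (hN (Ideal.subset_span hr))

theorem IsLocalizingSub.koszulD_mem_of_quotient_mem {J : Ideal R} {l : List R}
    (hJl : J ≤ Ideal.span {r | r ∈ l}) (hJ : smod R (.of R (R ⧸ J)) ∈ L) : koszulD R l ∈ L :=
  (hL.koszulD_mem_iff l).2 (hL.listColon_smod
    (fun M hM ↦ hL.smod_mem_of_quotient_mem hJ M (hJl.trans hM)) _)

end Koszul

section FiniteFree

variable {A : Type u} [Ring A]

/-- A bounded complex of free modules of finite rank. -/
structure IsFiniteFree (K : CochainComplex (ModuleCat.{u} A) ℤ) : Prop where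
  free (n : ℤ) : Module.Free A (K.X n)
  finite (n : ℤ) : Module.Finite A (K.X n)
  finite_support : {n : ℤ | ¬ IsZero (K.X n)}.Finite

theorem IsFiniteFree.exists_isStrictlyLE {K : CochainComplex (ModuleCat.{u} A) ℤ}
    (hK : IsFiniteFree K) : ∃ b : ℤ, K.IsStrictlyLE b := by
  obtain ⟨b, hb⟩ := hK.finite_support.bddAbove
  exact ⟨b, (K.isStrictlyLE_iff b).2 fun n hn ↦ by_contra fun h ↦ (hb h).not_gt hn⟩

theorem IsFiniteFree.isKProjective {K : CochainComplex (ModuleCat.{u} A) ℤ}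
    (hK : IsFiniteFree K) : K.IsKProjective := by
  obtain ⟨b, hb⟩ := hK.exists_isStrictlyLE
  have (n : ℤ) : Projective (K.X n) := by
    have := hK.free n
    exact (IsProjective.iff_projective (K.X n)).1 inferInstance
  exact CochainComplex.isKProjective_of_projective K b

theorem isFiniteFree_single (k : ℤ) :
    IsFiniteFree ((HomologicalComplex.single (ModuleCat.{u} A) (.up ℤ) k).obj (.of A A)) := by
  let K := (HomologicalComplex.single (ModuleCat.{u} A) (.up ℤ) k).obj (.of A A)
  have hzero {n : ℤ} (h : n ≠ k) : IsZero (K.X n) :=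
    HomologicalComplex.isZero_single_obj_X (.up ℤ) k (ModuleCat.of A A) n h
  let e : K.X k ≅ .of A A := HomologicalComplex.singleObjXSelf (.up ℤ) k (ModuleCat.of A A)
  refine ⟨fun n ↦ ?_, fun n ↦ ?_, (Set.finite_singleton k).subset fun n ↦ not_imp_comm.1 hzero⟩ <;>
    obtain rfl | h := eq_or_ne k n
  · exact Module.Free.of_equiv e.symm.toLinearEquiv
  · have := ModuleCat.subsingleton_of_isZero (hzero h.symm)
    exact Module.Free.of_subsingleton A (K.X n)
  · exact Module.Finite.equiv e.symm.toLinearEquiv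
  · have := ModuleCat.subsingleton_of_isZero (hzero h.symm)
    exact inferInstanceAs (Module.Finite A (K.X n))

theorem IsFiniteFree.shift {K : CochainComplex (ModuleCat.{u} A) ℤ} (hK : IsFiniteFree K) (n : ℤ) :
    IsFiniteFree (K⟦n⟧) where
  free i := hK.free (i + n)
  finite i := hK.finite (i + n)
  finite_support := hK.finite_support.preimage (add_left_injective n).injOn

theorem IsFiniteFree.mappingCone {K L : CochainComplex (ModuleCat.{u} A) ℤ} (hK : IsFiniteFree K)
    (hL : IsFiniteFree L) (φ : K ⟶ L) : IsFiniteFree (CochainComplex.mappingCone φ) := by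
  let e (n : ℤ) : (CochainComplex.mappingCone φ).X n ≅ K.X (n + 1) ⊞ L.X n :=
    HomologicalComplex.homotopyCofiber.XIsoBiprod φ n (n + 1) rfl
  let e' (n : ℤ) : (K.X (n + 1) × L.X n) ≃ₗ[A] (CochainComplex.mappingCone φ).X n :=
    (e n ≪≫ ModuleCat.biprodIsoProd _ _).symm.toLinearEquiv
  refine ⟨fun n ↦ ?_, fun n ↦ ?_, ?_⟩
  · have := hK.free (n + 1)
    have := hL.free n
    exact Module.Free.of_equiv (e' n)
  · have := hK.finite (n + 1)
    have := hL.finite n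
    exact Module.Finite.equiv (e' n)
  · refine ((hK.shift 1).finite_support.union hL.finite_support).subset fun n hn ↦ ?_
    by_contra! h
    rw [Set.mem_union, not_or] at h
    exact hn (((biprod_isZero_iff _ _).2 ⟨not_not.1 h.1, not_not.1 h.2⟩).of_iso (e n))

variable [HasDerivedCategory.{w'} (ModuleCat.{u} A)]

theorem exists_Q_map_eq_of_isKProjective {K L : CochainComplex (ModuleCat.{u} A) ℤ}
    [K.IsKProjective] (f : DerivedCategory.Q.obj K ⟶ DerivedCategory.Q.obj L) :
    ∃ φ : K ⟶ L, DerivedCategory.Q.map φ = f := by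
  let e := DerivedCategory.quotientCompQhIso (ModuleCat.{u} A)
  obtain ⟨g, hg⟩ := (CochainComplex.IsKProjective.Qh_map_bijective K
    ((HomotopyCategory.quotient _ _).obj L)).surjective (e.hom.app K ≫ f ≫ e.inv.app L)
  obtain ⟨φ, rfl⟩ := (HomotopyCategory.quotient _ _).map_surjective g
  refine ⟨φ, (cancel_epi (e.hom.app K)).1 ?_⟩
  rw [← e.hom.naturality φ]
  exact (hg =≫ e.hom.app L).trans (by simp)

variable (A) in
/-- The objects of the derived category represented by bounded complexes of free modules of finite
rank. -/
def finiteFree : ObjectProperty (DerivedCategory (ModuleCat.{u} A)) :=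
  fun X ↦ ∃ K : CochainComplex (ModuleCat.{u} A) ℤ,
    IsFiniteFree K ∧ Nonempty (DerivedCategory.Q.obj K ≅ X)

instance : (finiteFree A).IsClosedUnderIsomorphisms where
  of_iso e := fun ⟨K, hK, ⟨f⟩⟩ ↦ ⟨K, hK, ⟨f ≪≫ e⟩⟩

theorem finiteFree_singleSelf (k : ℤ) : finiteFree A (singleSelf A k) :=
  ⟨_, isFiniteFree_single k, ⟨Iso.refl _⟩⟩

instance : (finiteFree A).IsStableUnderShift ℤ where
  isStableUnderShiftBy n := ⟨fun _ ⟨K, hK, ⟨e⟩⟩ ↦ ⟨K⟦n⟧, hK.shift n,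
    ⟨(DerivedCategory.Q.commShiftIso n).app K ≪≫ (shiftFunctor _ n).mapIso e⟩⟩⟩

instance : (finiteFree A).IsTriangulatedClosed₃ := .mk' fun T hT ⟨K, hK, ⟨e⟩⟩ ⟨L, hL, ⟨e'⟩⟩ ↦ by
  have := hK.isKProjective
  obtain ⟨φ, hφ⟩ := exists_Q_map_eq_of_isKProjective (e.hom ≫ T.mor₁ ≫ e'.inv)
  refine ⟨_, hK.mappingCone hL φ, ⟨Triangle.π₃.mapIso
    (isoTriangleOfIso₁₂ _ _ (DerivedCategory.mappingCone_triangle_distinguished φ) hT e e' ?_)⟩⟩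
  exact (hφ =≫ e'.hom).trans (by simp; rfl)

instance : (finiteFree A).IsTriangulated where
  exists_zero := ⟨0, isZero_zero _, (finiteFree A).ext_of_isTriangulatedClosed₃ _
    (contractible_distinguished (singleSelf A 0)) (finiteFree_singleSelf 0)
    (finiteFree_singleSelf 0)⟩
  toIsTriangulatedClosed₂ := .of_isTriangulatedClosed₃

theorem IsCompactObj.exists_retract_finiteFree {c : DerivedCategory (ModuleCat.{u} A)}
    (hc : IsCompactObj.{u} c) : ∃ Y, finiteFree A Y ∧ Nonempty (Retract c Y) := by
  obtain ⟨Y, hY, h⟩ := hc.exists_retract (G := fun k : ULift.{u} ℤ ↦ singleSelf A k.down)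
    (fun k ↦ isCompactObj_singleSelf k.down) isDetecting_singleSelf
    (P := finiteFree A ⊓ IsCompactObj.{u}) (fun _ h ↦ h.2)
    (fun k ↦ ⟨finiteFree_singleSelf k.down, isCompactObj_singleSelf k.down⟩)
  exact ⟨Y, hY.1, h⟩

end FiniteFree

section ResidueField

open scoped TensorProduct

theorem isBaseChange_baseChangeHom (R S M N : Type*) [CommRing R] [CommRing S] [Algebra R S]
    [AddCommGroup M] [Module R M] [Module.Free R M] [Module.Finite R M] [AddCommGroup N]
    [Module R N] : IsBaseChange S (LinearMap.baseChangeHom R S M N) := by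
  let ε := TensorProduct.mk R S N 1
  have hM := TensorProduct.isBaseChange R M S
  have h : LinearMap.baseChangeHom R S M N = hM.linearMapLeftRightHom ε := by
    ext f x
    exact (hM.linearMapLeftRightHom_comp_apply ε f x).symm
  exact h ▸ hM.linearMapLeftRight (TensorProduct.isBaseChange R N S)

variable {R : Type*} [CommRing R] (p : Ideal R) [p.IsPrime] {k : Type*} [Field k] [Algebra R k]
  [Algebra (R ⧸ p) k] [IsScalarTower R (R ⧸ p) k] [IsFractionRing (R ⧸ p) k]

variable (k) in
omit [p.IsPrime] in
theorem algebraMap_eq_zero_iff_mem {x : R} : algebraMap R k x = 0 ↔ x ∈ p := by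
  rw [IsScalarTower.algebraMap_apply R (R ⧸ p) k, ← Ideal.Quotient.eq_zero_iff_mem]
  exact (IsFractionRing.injective (R ⧸ p) k).eq_iff' (map_zero _)

theorem exists_notMem_smul_eq_of_isBaseChange {M N : Type*} [AddCommMonoid M] [Module R M]
    [AddCommMonoid N] [Module R N] [Module k N] [IsScalarTower R k N] {f : M →ₗ[R] N}
    (hf : IsBaseChange k f) (y : N) : ∃ w ∉ p, ∃ m, f m = w • y := by
  induction y using hf.inductionOn with
  | zero => exact ⟨1, p.one_notMem, 0, by simp⟩
  | tmul m => exact ⟨1, p.one_notMem, m, (one_smul R _).symm⟩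
  | smul x y ih =>
    obtain ⟨w, hw, m, hm⟩ := ih
    obtain ⟨⟨a, s⟩, hx⟩ := IsLocalization.surj (nonZeroDivisors (R ⧸ p)) x
    obtain ⟨a, rfl⟩ := Ideal.Quotient.mk_surjective a
    obtain ⟨t, ht⟩ := Ideal.Quotient.mk_surjective (s : R ⧸ p)
    have htx : t • x = algebraMap R k a := by
      rw [Algebra.smul_def, IsScalarTower.algebraMap_apply R (R ⧸ p) k t,
        IsScalarTower.algebraMap_apply R (R ⧸ p) k a, mul_comm]
      exact (congr(x * algebraMap _ _ $ht)).trans hx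
    have htp : t ∉ p := fun h ↦
      nonZeroDivisors.coe_ne_zero s (ht ▸ Ideal.Quotient.eq_zero_iff_mem.2 h)
    refine ⟨t * w, p.primeCompl.mul_mem htp hw, a • m, ?_⟩
    rw [map_smul, hm, mul_smul, smul_comm w x y, ← smul_assoc t x, htx, algebraMap_smul]
  | add y z ihy ihz =>
    obtain ⟨v, hv, m, hm⟩ := ihy
    obtain ⟨w, hw, n, hn⟩ := ihz
    refine ⟨v * w, p.primeCompl.mul_mem hv hw, w • m + v • n, ?_⟩
    rw [map_add, map_smul, map_smul, hm, hn, smul_add, smul_smul, smul_smul, mul_comm w v]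

theorem exists_notMem_forall_mem_smul_eq_of_isBaseChange {ι : Type*} {M N : ι → Type*}
    [∀ i, AddCommMonoid (M i)] [∀ i, Module R (M i)] [∀ i, AddCommMonoid (N i)]
    [∀ i, Module R (N i)] [∀ i, Module k (N i)] [∀ i, IsScalarTower R k (N i)]
    {f : ∀ i, M i →ₗ[R] N i} (hf : ∀ i, IsBaseChange k (f i)) (y : ∀ i, N i) {s : Set ι}
    (hs : s.Finite) : ∃ w ∉ p, ∀ i ∈ s, ∃ m, f i m = w • y i := by
  induction s, hs using Set.Finite.induction_on with
  | empty => exact ⟨1, p.one_notMem, by simp⟩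
  | @insert i s _ _ ih =>
    obtain ⟨v, hv, m, hm⟩ := exists_notMem_smul_eq_of_isBaseChange p (hf i) (y i)
    obtain ⟨w, hw, ih⟩ := ih
    refine ⟨v * w, p.primeCompl.mul_mem hv hw,
      Set.forall_mem_insert.2 ⟨⟨w • m, ?_⟩, fun j hj ↦ ?_⟩⟩
    · rw [map_smul, hm, smul_smul, mul_comm]
    · obtain ⟨n, hn⟩ := ih j hj
      exact ⟨v • n, by rw [map_smul, hn, smul_smul]⟩

omit [p.IsPrime] in
theorem exists_fg_le_mem_smul_top_of_isBaseChange {M N : Type*} [AddCommGroup M] [Module R M]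
    [AddCommGroup N] [Module R N] [Module k N] [IsScalarTower R k N] [Module.Free R M]
    [Module.Finite R M] {f : M →ₗ[R] N} (hf : IsBaseChange k f) {m : M} (hm : f m = 0) :
    ∃ E : Ideal R, E.FG ∧ E ≤ p ∧ m ∈ E • (⊤ : Submodule R M) := by
  let b := Module.Free.chooseBasis R M
  refine ⟨Ideal.span (Set.range (b.repr m)), Submodule.fg_span (Set.finite_range _),
    Ideal.span_le.2 ?_, ?_⟩
  · rintro _ ⟨i, rfl⟩
    have h := hf.basis_repr_comp_apply b m i
    rw [hm, map_zero, Finsupp.zero_apply] at h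
    exact (algebraMap_eq_zero_iff_mem p k).1 h.symm
  · rw [← b.sum_repr m]
    exact Submodule.sum_mem _ fun i _ ↦ Submodule.smul_mem_smul
      (Ideal.subset_span ⟨i, by rw [b.sum_repr]⟩) trivial

end ResidueField

section BaseChange

open scoped TensorProduct

theorem exists_cycle_dual_of_not_exactAt {k : Type u} [Field k]
    {C : CochainComplex (ModuleCat.{u} k) ℤ} {n : ℤ} (hn : ¬ C.ExactAt n) :
    ∃ (x : C.X n) (φ : Module.Dual k (C.X n)), (C.d n (n + 1)).hom x = 0 ∧
      (∀ y, φ ((C.d (n - 1) n).hom y) = 0) ∧ φ x ≠ 0 := by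
  rw [C.exactAt_iff' (n - 1) n (n + 1) (by simp) (by simp), ShortComplex.moduleCat_exact_iff] at hn
  push Not at hn
  obtain ⟨x, hx, h⟩ := hn
  obtain ⟨φ, hφ, hle⟩ := Submodule.exists_le_ker_of_notMem
    (p := LinearMap.range (C.d (n - 1) n).hom) (v := x) (by rintro ⟨y, hy⟩; exact h y hy)
  exact ⟨x, φ, hx, fun y ↦ hle ⟨y, rfl⟩, hφ⟩

variable {R : Type u} [CommRing R]

/-- The extension of scalars of a complex of `R`-modules to an `R`-algebra `S`. -/
@[simps]
noncomputable def baseChangeCx (S : Type u) [CommRing S] [Algebra R S]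
    (K : CochainComplex (ModuleCat.{u} R) ℤ) : CochainComplex (ModuleCat.{u} S) ℤ where
  X n := .of S (S ⊗[R] K.X n)
  d i j := ModuleCat.ofHom ((K.d i j).hom.baseChange S)
  shape i j h := by
    rw [K.shape i j h]
    ext x
    simp
  d_comp_d' i j k _ _ := by
    rw [← ModuleCat.ofHom_comp, ← LinearMap.baseChange_comp, ← ModuleCat.hom_comp, K.d_comp_d]
    ext x
    simp

theorem IsFiniteFree.extendScalars {K : CochainComplex (ModuleCat.{u} R) ℤ} (hK : IsFiniteFree K)
    (S : Type u) [CommRing S] [Algebra R S] : IsFiniteFree (baseChangeCx S K) where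
  free n := by
    have := hK.free n
    exact inferInstanceAs (Module.Free S (S ⊗[R] K.X n))
  finite n := by
    have := hK.finite n
    exact inferInstanceAs (Module.Finite S (S ⊗[R] K.X n))
  finite_support := hK.finite_support.subset fun n hn h ↦ hn <| by
    have := ModuleCat.subsingleton_of_isZero h
    exact ModuleCat.isZero_of_subsingleton (.of S (S ⊗[R] K.X n))

end BaseChange

section NonAcyclic

open scoped TensorProduct

variable {R : Type u} [CommRing R] (p : Ideal R) [p.IsPrime] {k : Type u} [Field k] [Algebra R k]
  [Algebra (R ⧸ p) k] [IsScalarTower R (R ⧸ p) k] [IsFractionRing (R ⧸ p) k]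
  {K : CochainComplex (ModuleCat.{u} R) ℤ}

theorem IsFiniteFree.exists_cycle_dual_of_not_exactAt (hK : IsFiniteFree K) {n : ℤ}
    (hn : ¬ (baseChangeCx k K).ExactAt n) :
    ∃ (E : Ideal R) (z : K.X n) (φ : K.X n →ₗ[R] R), E.FG ∧ E ≤ p ∧
      (K.d n (n + 1)).hom z ∈ E • (⊤ : Submodule R (K.X (n + 1))) ∧
      (∀ y, φ ((K.d (n - 1) n).hom y) ∈ E) ∧ φ z ∉ p := by
  have := hK.free
  have := hK.finite
  have hbase (i : ℤ) : IsBaseChange k (TensorProduct.mk R k (K.X i) 1) :=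
    TensorProduct.isBaseChange R (K.X i) k
  obtain ⟨x, ψ, hx, hψ, hψx⟩ :
      ∃ (x : k ⊗[R] K.X n) (ψ : k ⊗[R] K.X n →ₗ[k] _),
        (K.d n (n + 1)).hom.baseChange _ x = 0 ∧
        (∀ y, ψ ((K.d (n - 1) n).hom.baseChange _ y) = 0) ∧ ψ x ≠ 0 :=
    _root_.exists_cycle_dual_of_not_exactAt hn
  obtain ⟨v, hv, z, hz⟩ := exists_notMem_smul_eq_of_isBaseChange p (hbase n) x
  obtain ⟨w, hw, φ, hφ⟩ := exists_notMem_smul_eq_of_isBaseChange p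
    ((hbase n).linearMapLeftRight (.linearMap R k)) ψ
  have hφ' (y : K.X n) : algebraMap R k (φ y) = w • ψ (1 ⊗ₜ y) := by
    rw [← LinearMap.smul_apply, ← hφ]
    exact ((hbase n).linearMapLeftRightHom_comp_apply (Algebra.linearMap R k) φ y).symm
  have hdz : (1 : k) ⊗ₜ[R] (K.d n (n + 1)).hom z = 0 := by
    rw [← LinearMap.baseChange_tmul (A := k)]
    exact (congrArg _ hz).trans (by rw [LinearMap.map_smul_of_tower, hx, smul_zero])
  obtain ⟨E, hE, hEp, hzE⟩ := exists_fg_le_mem_smul_top_of_isBaseChange p (hbase (n + 1)) hdz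
  refine ⟨E ⊔ LinearMap.range (φ ∘ₗ (K.d (n - 1) n).hom), z, φ,
    Submodule.FG.sup hE (Submodule.fg_range _), sup_le hEp ?_,
    Submodule.smul_mono_left le_sup_left hzE, fun y ↦ ?_, fun h ↦ ?_⟩
  · rintro _ ⟨y, rfl⟩
    refine (algebraMap_eq_zero_iff_mem p k).1 ((hφ' _).trans ?_)
    rw [← LinearMap.baseChange_tmul (A := k), hψ, smul_zero]
  · exact le_sup_right (a := E) ⟨y, rfl⟩
  · rw [← algebraMap_eq_zero_iff_mem p k, hφ', show 1 ⊗ₜ z = v • x from hz,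
      LinearMap.map_smul_of_tower, ← mul_smul, Algebra.smul_def, mul_eq_zero,
      algebraMap_eq_zero_iff_mem p k] at h
    exact h.elim (p.primeCompl.mul_mem hw hv) hψx

end NonAcyclic

section Acyclic

open scoped TensorProduct

theorem IsFiniteFree.exists_contraction {R : Type u} [CommRing R]
    {K : CochainComplex (ModuleCat.{u} R) ℤ} {S : Type u} [CommRing S] [Algebra R S]
    (hK : IsFiniteFree K) (hex : (baseChangeCx S K).Acyclic) :
    ∃ y : ∀ i j, S ⊗[R] K.X i →ₗ[S] S ⊗[R] K.X j, ∀ i j l : ℤ, i + 1 = j → j + 1 = l →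
      y l j ∘ₗ (K.d j l).hom.baseChange S + (K.d i j).hom.baseChange S ∘ₗ y j i = .id := by
  have := (hK.extendScalars S).isKProjective
  let h := CochainComplex.IsKProjective.homotopyZero (𝟙 (baseChangeCx S K)) hex
  refine ⟨fun i j ↦ (h.hom i j).hom, fun i j l hij hjl ↦ ?_⟩
  have hj := h.comm j
  rw [dNext_eq h.hom hjl, prevD_eq h.hom hij, HomologicalComplex.zero_f, add_zero] at hj
  exact congr(($hj).hom).symm

variable {R : Type u} [CommRing R] (p : Ideal R) [p.IsPrime] {k : Type u} [Field k] [Algebra R k]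
  [Algebra (R ⧸ p) k] [IsScalarTower R (R ⧸ p) k] [IsFractionRing (R ⧸ p) k]
  {K : CochainComplex (ModuleCat.{u} R) ℤ}

theorem IsFiniteFree.exists_notMem_forall_exists_baseChange_eq_smul (hK : IsFiniteFree K)
    (y : ∀ i j, k ⊗[R] K.X i →ₗ[k] k ⊗[R] K.X j) :
    ∃ w ∉ p, ∀ i j, ∃ g : K.X i →ₗ[R] K.X j, g.baseChange k = w • y i j := by
  have := hK.free
  have := hK.finite
  have hf (n : ℤ × ℤ) := isBaseChange_baseChangeHom R k (K.X n.1) (K.X n.2)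
  obtain ⟨w, hw, H⟩ := exists_notMem_forall_mem_smul_eq_of_isBaseChange p hf
    (fun n ↦ y n.1 n.2) (hK.finite_support.prod hK.finite_support)
  refine ⟨w, hw, fun i j ↦ ?_⟩
  by_cases hi : IsZero (K.X i)
  · have := ModuleCat.subsingleton_of_isZero hi
    exact ⟨0, by ext x; simp [Subsingleton.elim x 0]⟩
  by_cases hj : IsZero (K.X j)
  · have := ModuleCat.subsingleton_of_isZero hj
    exact ⟨0, Subsingleton.elim _ _⟩
  · exact H (i, j) ⟨hi, hj⟩

theorem IsFiniteFree.exists_homotopy_zero_det_notMem (hK : IsFiniteFree K)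
    (hex : (baseChangeCx k K).Acyclic) :
    ∃ (ψ : K ⟶ K), Nonempty (Homotopy ψ 0) ∧ ∀ n, LinearMap.det (ψ.f n).hom ∉ p := by
  obtain ⟨y, hy⟩ := hK.exists_contraction hex
  obtain ⟨w, hw, H⟩ := hK.exists_notMem_forall_exists_baseChange_eq_smul p y
  choose g hg using H
  let ψ : K ⟶ K := Homotopy.nullHomotopicMap' fun i j _ ↦ ModuleCat.ofHom (g i j)
  have := hK.free
  have := hK.finite
  refine ⟨ψ, ⟨Homotopy.nullHomotopy' _⟩, fun n ↦ ?_⟩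
  have hψ : (ψ.f n).hom.baseChange k = w • .id := by
    have hn : n - 1 + 1 = n := sub_add_cancel n 1
    rw [Homotopy.nullHomotopicMap'_f hn rfl, ← hy (n - 1) n (n + 1) hn rfl]
    change LinearMap.baseChange k
      (g (n + 1) n ∘ₗ (K.d n (n + 1)).hom + (K.d (n - 1) n).hom ∘ₗ g n (n - 1)) = _
    rw [LinearMap.baseChange_add, LinearMap.baseChange_comp, LinearMap.baseChange_comp, hg, hg,
      smul_add, LinearMap.smul_comp, LinearMap.comp_smul]
  rw [← algebraMap_eq_zero_iff_mem p k, ← LinearMap.det_baseChange, hψ,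
    ← algebraMap_smul k w, LinearMap.det_smul, LinearMap.det_id, mul_one]
  exact pow_ne_zero _ fun h ↦ hw ((algebraMap_eq_zero_iff_mem p k).1 h)

end Acyclic

section CayleyHamilton

variable {R : Type u} [CommRing R] {K : CochainComplex (ModuleCat.{u} R) ℤ}

/-- Evaluation of the endomorphisms of a complex in degree `n`. -/
def evalEnd (K : CochainComplex (ModuleCat.{u} R) ℤ) (n : ℤ) : End K →ₐ[R] Module.End R (K.X n) :=
  AlgHom.ofLinearMap { toFun ψ := (ψ.f n).hom, map_add' _ _ := rfl, map_smul' _ _ := rfl }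
    rfl fun _ _ ↦ rfl

theorem aeval_prod_charpoly_evalEnd [∀ n, Module.Free R (K.X n)] [∀ n, Module.Finite R (K.X n)]
    {s : Finset ℤ} (hs : ∀ n ∉ s, IsZero (K.X n)) (ψ : End K) :
    Polynomial.aeval ψ (∏ n ∈ s, (evalEnd K n ψ).charpoly) = 0 := by
  refine HomologicalComplex.hom_ext _ _ fun n ↦ ModuleCat.hom_ext ?_
  change evalEnd K n _ = evalEnd K n 0
  rw [← Polynomial.aeval_algHom_apply, map_zero]
  by_cases hn : n ∈ s
  · rw [← Finset.mul_prod_erase _ _ hn, map_mul, LinearMap.aeval_self_charpoly, zero_mul]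
  · have := ModuleCat.subsingleton_of_isZero (hs n hn)
    exact Subsingleton.elim _ _

variable [HasDerivedCategory.{w'} (ModuleCat.{u} R)]

theorem prod_det_smul_id_Q_obj_eq_zero [∀ n, Module.Free R (K.X n)]
    [∀ n, Module.Finite R (K.X n)] {s : Finset ℤ} (hs : ∀ n ∉ s, IsZero (K.X n)) {ψ : End K}
    (h : Homotopy ψ 0) :
    (∏ n ∈ s, LinearMap.det (evalEnd K n ψ)) • 𝟙 (DerivedCategory.Q.obj K) = 0 := by
  let χ : Polynomial R := ∏ n ∈ s, (evalEnd K n ψ).charpoly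
  have hχ : Polynomial.aeval ψ χ.divX * ψ + algebraMap R (End K) (χ.coeff 0) = 0 := by
    have hχ : Polynomial.aeval ψ χ = 0 := aeval_prod_charpoly_evalEnd hs ψ
    rwa [← χ.divX_mul_X_add, map_add, map_mul, Polynomial.aeval_X, Polynomial.aeval_C] at hχ
  have hψ : DerivedCategory.Q.map ψ = 0 :=
    (DerivedCategory.Q_map_eq_of_homotopy _ h).trans (DerivedCategory.Q.map_zero _ _)
  have hQ : χ.coeff 0 • 𝟙 (DerivedCategory.Q.obj K) = 0 := by
    rw [Algebra.algebraMap_eq_smul_one] at hχ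
    have := congrArg DerivedCategory.Q.map hχ
    rwa [End.mul_def, Functor.map_add, Functor.map_comp, hψ, zero_comp, zero_add,
      CategoryTheory.Functor.map_smul, End.one_def, CategoryTheory.Functor.map_id,
      Functor.map_zero] at this
  simp_rw [LinearMap.det_eq_sign_charpoly_coeff]
  rw [Finset.prod_mul_distrib, ← Polynomial.coeff_zero_prod, mul_smul]
  exact (congrArg _ hQ).trans (smul_zero _)

theorem IsFiniteFree.exists_notMem_smul_id_Q_obj_eq_zero (hK : IsFiniteFree K) (p : Ideal R)
    [p.IsPrime] {k : Type u} [Field k] [Algebra R k] [Algebra (R ⧸ p) k]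
    [IsScalarTower R (R ⧸ p) k] [IsFractionRing (R ⧸ p) k] (hex : (baseChangeCx k K).Acyclic) :
    ∃ s ∉ p, s • 𝟙 (DerivedCategory.Q.obj K) = 0 := by
  have := hK.free
  have := hK.finite
  obtain ⟨ψ, ⟨h⟩, hψ⟩ := hK.exists_homotopy_zero_det_notMem p hex
  refine ⟨_, fun hp ↦ ?_,
    prod_det_smul_id_Q_obj_eq_zero (s := hK.finite_support.toFinset) (by simp) h⟩
  obtain ⟨n, -, hn⟩ := Ideal.IsPrime.prod_mem_iff.1 hp
  exact hψ n hn

end CayleyHamilton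

section TensorComplex

open MonoidalCategory
open scoped TensorProduct

variable {R : Type u} [CommRing R] (K : CochainComplex (ModuleCat.{u} R) ℤ)

/-- The functor sending a module `N` to the complex `K ⊗ N`. -/
noncomputable def tensorCx : ModuleCat.{u} R ⥤ CochainComplex (ModuleCat.{u} R) ℤ :=
  HomologicalComplex.asFunctor (((curriedTensor _).mapHomologicalComplex _).obj K)

instance (n : ℤ) : PreservesColimits (tensorCx K ⋙ HomologicalComplex.eval _ _ n) :=
  inferInstanceAs (PreservesColimits (tensorLeft (K.X n)))

instance : PreservesColimits (tensorCx K) where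
  preservesColimitsOfShape := HomologicalComplex.preservesColimitsOfShape_of_eval _ inferInstance

instance : (tensorCx K).PreservesZeroMorphisms where
  map_zero M N := HomologicalComplex.hom_ext _ _ fun n ↦
    ((tensorLeft (K.X n)).map_zero M N : _)

instance [∀ n, Module.Flat R (K.X n)] : PreservesFiniteLimits (tensorCx K) where
  preservesFiniteLimits J _ _ := HomologicalComplex.preservesLimitsOfShape_of_eval _ fun n ↦
    inferInstanceAs (PreservesLimitsOfShape J (tensorLeft (K.X n)))

/-- The isomorphism `K ⊗ R ≅ K`. -/
noncomputable def tensorCxUnitIso : (tensorCx K).obj (.of R R) ≅ K :=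
  HomologicalComplex.Hom.isoOfComponents (fun n ↦ ρ_ (K.X n)) fun _ _ _ ↦
    (rightUnitor_naturality _).symm

variable {K}

theorem isLE_Q_obj_tensorCx_obj [HasDerivedCategory.{w'} (ModuleCat.{u} R)] {b : ℤ}
    (hb : K.IsStrictlyLE b) (N : ModuleCat.{u} R) :
    (DerivedCategory.Q.obj ((tensorCx K).obj N)).IsLE b := by
  have : ((tensorCx K).obj N).IsStrictlyLE b := by
    refine (CochainComplex.isStrictlyLE_iff _ b).2 fun n hn ↦ ?_
    exact ((tensorRight N).map_isZero ((K.isStrictlyLE_iff b).1 hb n hn) : _)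
  infer_instance

theorem IsFiniteFree.Q_obj_tensorCx_mem [HasDerivedCategory.{w'} (ModuleCat.{u} R)]
    (hK : IsFiniteFree K) {L : Set (DerivedCategory (ModuleCat.{u} R))}
    (hL : IsLocalizingSub.{u} L) (hKL : DerivedCategory.Q.obj K ∈ L) (N : ModuleCat.{u} R) :
    DerivedCategory.Q.obj ((tensorCx K).obj N) ∈ L := by
  have := hK.free
  obtain ⟨b, hb⟩ := hK.exists_isStrictlyLE
  exact hL.Q_obj_mem (isLE_Q_obj_tensorCx_obj hb)
    (hL.mem_of_iso (DerivedCategory.Q.mapIso (tensorCxUnitIso K)).symm hKL) N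

theorem tmul_eq_zero_of_mem_smul_top {I : Ideal R} {M N : Type*} [AddCommGroup M] [Module R M]
    [AddCommGroup N] [Module R N] (hN : I ≤ Module.annihilator R N) {m : M}
    (hm : m ∈ I • (⊤ : Submodule R M)) (x : N) : m ⊗ₜ[R] x = 0 := by
  induction hm using Submodule.smul_induction_on' with
  | smul r hr y _ =>
    rw [TensorProduct.smul_tmul, Module.mem_annihilator.1 (hN hr) x, TensorProduct.tmul_zero]
  | add y _ z _ hy hz => rw [TensorProduct.add_tmul, hy, hz, add_zero]

theorem exists_comp_eq_smul_id_single {I : Ideal R} {n : ℤ} (z : K.X n) (φ : K.X n →ₗ[R] R)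
    (hz : (K.d n (n + 1)).hom z ∈ I • (⊤ : Submodule R (K.X (n + 1))))
    (hφ : ∀ y, φ ((K.d (n - 1) n).hom y) ∈ I) {N : ModuleCat.{u} R}
    (hN : I ≤ Module.annihilator R N) :
    ∃ (a : (HomologicalComplex.single _ _ n).obj N ⟶ (tensorCx K).obj N)
      (b : (tensorCx K).obj N ⟶ (HomologicalComplex.single _ _ n).obj N), a ≫ b = φ z • 𝟙 _ := by
  let α : N ⟶ ((tensorCx K).obj N).X n := ModuleCat.ofHom (TensorProduct.mk R (K.X n) N z)
  let β : ((tensorCx K).obj N).X n ⟶ N :=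
    ModuleCat.ofHom (TensorProduct.lift (.comp (.lsmul R N) φ))
  have hα (m : ℤ) (hm : (ComplexShape.up ℤ).Rel n m) : α ≫ ((tensorCx K).obj N).d n m = 0 := by
    obtain rfl : n + 1 = m := hm
    exact ModuleCat.hom_ext (LinearMap.ext (tmul_eq_zero_of_mem_smul_top hN hz))
  have hβ (m : ℤ) (hm : (ComplexShape.up ℤ).Rel m n) : ((tensorCx K).obj N).d m n ≫ β = 0 := by
    obtain rfl : m = n - 1 := eq_sub_of_add_eq hm
    exact ModuleCat.hom_ext (TensorProduct.ext' fun y x ↦ Module.mem_annihilator.1 (hN (hφ y)) x)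
  refine ⟨HomologicalComplex.mkHomFromSingle α hα, HomologicalComplex.mkHomToSingle β hβ,
    HomologicalComplex.from_single_hom_ext ?_⟩
  have hαβ : α ≫ β = φ z • 𝟙 N := rfl
  rw [HomologicalComplex.comp_f, HomologicalComplex.mkHomFromSingle_f,
    HomologicalComplex.mkHomToSingle_f, Category.assoc, reassoc_of% hαβ]
  simp

end TensorComplex

section GabrielFilter

variable {R : Type u} [CommRing R] [HasDerivedCategory.{w'} (ModuleCat.{u} R)]
  (L : Set (DerivedCategory (ModuleCat.{u} R)))

/-- The filter of ideals generated by the finitely generated ideals `J` with `R ⧸ J ∈ L`. For a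
localizing subcategory `L` it is the Gabriel filter of the torsion modules lying in `L`. -/
def gabrielFilter : Set (Ideal R) :=
  {I | ∃ J ≤ I, J.FG ∧ smod R (.of R (R ⧸ J)) ∈ L}

variable {L} (hL : IsLocalizingSub.{u} L)
include hL

theorem IsLocalizingSub.quotient_mul_mem {I J : Ideal R} (hI : smod R (.of R (R ⧸ I)) ∈ L)
    (hJ : smod R (.of R (R ⧸ J)) ∈ L) : smod R (.of R (R ⧸ (I * J))) ∈ L := by
  let g : (R ⧸ I * J) →ₗ[R] R ⧸ I := Submodule.factor Ideal.mul_le_left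
  refine hL.smod_mem_of_shortExact (g.shortExact_shortComplexKer (Submodule.factor_surjective _))
    (hL.smod_mem_of_quotient_mem hJ _ fun r hr ↦ Module.mem_annihilator.2 fun ⟨y, hy⟩ ↦ ?_) hI
  obtain ⟨t, rfl⟩ := Ideal.Quotient.mk_surjective y
  have ht : t ∈ I := Ideal.Quotient.eq_zero_iff_mem.1 hy
  have hrt : r * t ∈ I * J := mul_comm t r ▸ Ideal.mul_mem_mul ht hr
  exact Subtype.ext (Ideal.Quotient.eq_zero_iff_mem.2 hrt)

theorem IsLocalizingSub.quotient_mem_of_mem_gabrielFilter {I : Ideal R}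
    (hI : I ∈ gabrielFilter L) : smod R (.of R (R ⧸ I)) ∈ L := by
  obtain ⟨J, hJI, -, hJ⟩ := hI
  exact hL.smod_mem_of_quotient_mem hJ _ (hJI.trans_eq Ideal.annihilator_quotient.symm)

theorem IsLocalizingSub.isOka_mem_gabrielFilter : Ideal.IsOka (· ∈ gabrielFilter L) where
  top := ⟨⊤, le_rfl, Ideal.fg_top R, hL.toObjectProperty.prop_of_isZero
    ((DerivedCategory.singleFunctor _ 0).map_isZero (ModuleCat.isZero_of_subsingleton _))⟩
  oka := by
    rintro I a ⟨J₁, hJ₁, hfg₁, hL₁⟩ ⟨J₂, hJ₂, hfg₂, hL₂⟩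
    refine ⟨J₁ * J₂, (Ideal.mul_mono hJ₁ hJ₂).trans ?_, hfg₁.mul hfg₂, hL.quotient_mul_mem hL₁ hL₂⟩
    rw [Ideal.sup_mul, sup_le_iff, Ideal.span_singleton_mul_le_iff]
    exact ⟨Ideal.mul_le_left, fun x hx ↦ mul_comm x a ▸ Ideal.mem_colon_span_singleton.1 hx⟩

theorem IsLocalizingSub.exists_isPrime_notMem_gabrielFilter {I : Ideal R}
    (hI : I ∉ gabrielFilter L) :
    ∃ p, I ≤ p ∧ p.IsPrime ∧ Maximal (· ∉ gabrielFilter L) p := by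
  have hchain (c : Set (Ideal R)) (hc : c ⊆ {J | J ∉ gabrielFilter L}) (hch : IsChain (· ≤ ·) c)
      (J₀ : Ideal R) (hJ₀ : J₀ ∈ c) : sSup c ∉ gabrielFilter L := by
    rintro ⟨J, hJc, hfg, hJ⟩
    obtain ⟨I, hI, hJI⟩ := (CompleteLattice.isCompactElement_iff_le_of_directed_sSup_le _ _).1
      ((Submodule.fg_iff_compact J).1 hfg) c ⟨J₀, hJ₀⟩ hch.directedOn hJc
    exact hc hI ⟨J, hJI, hfg, hJ⟩
  obtain ⟨p, hIp, hp⟩ := zorn_le_nonempty₀ {J | J ∉ gabrielFilter L}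
    (fun c hc hch J₀ hJ₀ ↦ ⟨sSup c, hchain c hc hch J₀ hJ₀, fun _ ↦ le_sSup⟩) I hI
  exact ⟨p, hIp, hL.isOka_mem_gabrielFilter.isPrime_of_maximal_not hp, hp⟩

end GabrielFilter

section PerfectSupport

theorem exists_fg_le_sup_of_fg_le_sup {A M : Type*} [Semiring A] [AddCommMonoid M] [Module A M]
    {P N N' : Submodule A M} (hP : P.FG) (h : P ≤ N ⊔ N') : ∃ E ≤ N, E.FG ∧ P ≤ E ⊔ N' := by
  induction P, hP using Submodule.fg_induction with
  | singleton x =>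
    obtain ⟨y, hy, z, hz, rfl⟩ :=
      Submodule.mem_sup.1 (h (Submodule.mem_span_singleton_self x))
    refine ⟨A ∙ y, by simpa using hy, Submodule.fg_span_singleton y, ?_⟩
    rw [Submodule.span_singleton_le_iff_mem]
    exact Submodule.add_mem_sup (Submodule.mem_span_singleton_self y) hz
  | sup P₁ P₂ _ _ h₁ h₂ =>
    obtain ⟨E₁, hE₁, hfg₁, hP₁⟩ := h₁ (le_sup_left.trans h)
    obtain ⟨E₂, hE₂, hfg₂, hP₂⟩ := h₂ (le_sup_right.trans h)
    exact ⟨E₁ ⊔ E₂, sup_le hE₁ hE₂, hfg₁.sup hfg₂,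
      sup_le (hP₁.trans (sup_le_sup_right le_sup_left _))
        (hP₂.trans (sup_le_sup_right le_sup_right _))⟩

variable {R : Type u} [CommRing R] [HasDerivedCategory.{w'} (ModuleCat.{u} R)]
  {L : Set (DerivedCategory (ModuleCat.{u} R))} (hL : IsLocalizingSub.{u} L)

theorem nonempty_Q_obj_single_iso (M : ModuleCat.{u} R) (n : ℤ) :
    Nonempty (DerivedCategory.Q.obj ((HomologicalComplex.single _ (.up ℤ) n).obj M) ≅
      (smod R M)⟦-n⟧) :=
  ⟨(((DerivedCategory.singleFunctors (ModuleCat.{u} R)).shiftIso (-n) n 0 (by simp)).app M).symm⟩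

theorem IsLocalizingSub.smod_mem_of_fac {s : R} {M : ModuleCat.{u} R}
    (hM : colon hL.toObjectProperty s (smod R M)) {n : ℤ} {T : CochainComplex (ModuleCat.{u} R) ℤ}
    (hT : DerivedCategory.Q.obj T ∈ L) (a : (HomologicalComplex.single _ _ n).obj M ⟶ T)
    (b : T ⟶ (HomologicalComplex.single _ _ n).obj M) (hab : a ≫ b = s • 𝟙 _) :
    smod R M ∈ L := by
  obtain ⟨e⟩ := nonempty_Q_obj_single_iso M n
  have hQ : DerivedCategory.Q.map a ≫ DerivedCategory.Q.map b = s • 𝟙 _ := by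
    rw [← Functor.map_comp, hab, CategoryTheory.Functor.map_smul, CategoryTheory.Functor.map_id]
  have hs := (colon hL.toObjectProperty s).prop_of_iso e.symm
    ((colon hL.toObjectProperty s).le_shift (-n) _ hM)
  have h := hL.toObjectProperty.prop_of_iso e
    (prop_of_colon_of_fac _ _ hs hT _ _ hQ)
  exact (hL.toObjectProperty.prop_shift_iff_of_isStableUnderShift _ (-n)).1 h

variable {K : CochainComplex (ModuleCat.{u} R) ℤ}

include hL

theorem IsFiniteFree.mem_gabrielFilter_of_not_exactAt (hK : IsFiniteFree K)
    (hKL : DerivedCategory.Q.obj K ∈ L) {p : Ideal R} [p.IsPrime]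
    (hp : ∀ J, p < J → J ∈ gabrielFilter L) {n : ℤ}
    (hn : ¬ (baseChangeCx p.ResidueField K).ExactAt n) : p ∈ gabrielFilter L := by
  obtain ⟨E, z, φ, hE, hEp, hz, hφ, hs⟩ := hK.exists_cycle_dual_of_not_exactAt p hn
  obtain ⟨J, hJ, hJfg, hJL⟩ := hp (p ⊔ Ideal.span {φ z}) (by simpa using hs)
  obtain ⟨E', hE'p, hE', hJE'⟩ := exists_fg_le_sup_of_fg_le_sup hJfg hJ
  have hann : E ⊔ E' ≤ Module.annihilator R (R ⧸ (E ⊔ E')) := Ideal.annihilator_quotient.ge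
  obtain ⟨a, b, hab⟩ := exists_comp_eq_smul_id_single (N := .of R (R ⧸ (E ⊔ E'))) z φ hz hφ
    (le_sup_left.trans hann)
  have hcolon : colon hL.toObjectProperty (φ z) (smod R (.of R (R ⧸ (E ⊔ E')))) :=
    hL.colon_smod fun N hN ↦ hL.smod_mem_of_quotient_mem hJL N
      ((hJE'.trans (sup_le_sup_right (le_sup_right.trans hann) _)).trans hN)
  exact ⟨E ⊔ E', sup_le hEp hE'p, Submodule.FG.sup hE hE',
    hL.smod_mem_of_fac hcolon (hK.Q_obj_tensorCx_mem hL hKL _) a b hab⟩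

theorem IsFiniteFree.torsionOf_id_mem_gabrielFilter (hK : IsFiniteFree K)
    (hKL : DerivedCategory.Q.obj K ∈ L) :
    Ideal.torsionOf R _ (𝟙 (DerivedCategory.Q.obj K)) ∈ gabrielFilter L := by
  by_contra hI
  obtain ⟨p, hIp, hp, hmax⟩ := hL.exists_isPrime_notMem_gabrielFilter hI
  by_cases hacyc : (baseChangeCx p.ResidueField K).Acyclic
  · obtain ⟨s, hs, h⟩ := hK.exists_notMem_smul_id_Q_obj_eq_zero p hacyc
    exact hs (hIp h)
  · obtain ⟨n, hn⟩ := not_forall.1 hacyc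
    exact hmax.prop (hK.mem_gabrielFilter_of_not_exactAt hL hKL
      (fun J hJ ↦ not_not.1 (hmax.not_prop_of_gt hJ)) hn)

end PerfectSupport

section LocalObjects

variable {T : Type u} [Category.{v} T] [Preadditive T] {R : Type*} [CommRing R] [Linear R T]

/-- The objects on which the elements of `s` act invertibly. Their left orthogonal is a localizing
subcategory containing every object killed by an element of `s`. -/
def localObjects (s : Set R) : ObjectProperty T :=
  fun Y ↦ ∀ r ∈ s, IsIso (r • 𝟙 Y)

theorem leftOrthogonal_localObjects {s : Set R} {r : R} (hr : r ∈ s) {X : T}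
    (hX : r • 𝟙 X = 0) : (localObjects s).leftOrthogonal X := fun Y f hY ↦ by
  have := hY r hr
  rw [← cancel_mono (r • 𝟙 Y), zero_comp, Linear.comp_smul, Category.comp_id]
  simpa using hX =≫ f

instance [HasShift T ℤ] [∀ n : ℤ, (shiftFunctor T n).Additive]
    [∀ n : ℤ, (shiftFunctor T n).Linear R] (s : Set R) :
    (localObjects (T := T) s).IsStableUnderShift ℤ where
  isStableUnderShiftBy n := ⟨fun Y hY r hr ↦ by
    have := hY r hr
    rw [← (shiftFunctor T n).map_id, ← Functor.map_smul]
    infer_instance⟩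

instance (P : ObjectProperty T) (ι : Type*) :
    P.leftOrthogonal.IsClosedUnderColimitsOfShape (Discrete ι) where
  colimitsOfShape_le := fun _ ⟨h⟩ _ f hY ↦
    h.isColimit.hom_ext fun j ↦ (h.prop_diag_obj j (h.ι.app j ≫ f) hY).trans comp_zero.symm

end LocalObjects

section ResidueFieldObject

variable {R : Type u} [CommRing R] [HasDerivedCategory.{w'} (ModuleCat.{u} R)]
  (p : Ideal R) [p.IsPrime]

theorem localObjects_smod_residueField :
    localObjects (p : Set R)ᶜ (smod R (.of R p.ResidueField)) := fun r hr ↦ by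
  have hr₀ : algebraMap R p.ResidueField r ≠ 0 :=
    fun h ↦ hr (Ideal.algebraMap_residueField_eq_zero.1 h)
  have : IsIso (r • 𝟙 (ModuleCat.of R p.ResidueField)) := by
    refine (ConcreteCategory.isIso_iff_bijective _).2 ?_
    convert mulLeft_bijective₀ _ hr₀ using 2 with x
    exact Algebra.smul_def r x
  rw [← singleFunctor_map_smul_id]
  exact Functor.map_isIso _ _

variable {p}

theorem exists_smod_quotient_hom_residueField_ne_zero {I : Ideal R} (hI : I ≤ p) :
    ∃ f : smod R (.of R (R ⧸ I)) ⟶ smod R (.of R p.ResidueField), f ≠ 0 := by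
  let g : ModuleCat.of R (R ⧸ I) ⟶ .of R p.ResidueField :=
    ModuleCat.ofHom (Submodule.liftQ I (Algebra.linearMap R p.ResidueField)
      fun r hr ↦ Ideal.algebraMap_residueField_eq_zero.2 (hI hr))
  refine ⟨(DerivedCategory.singleFunctor _ 0).map g, fun h ↦ ?_⟩
  have hg : g = 0 := (DerivedCategory.singleFunctor _ 0).map_injective
    (h.trans (Functor.map_zero _ _ _).symm)
  have h1 : algebraMap R p.ResidueField 1 = 0 := congr(($hg).hom (Ideal.Quotient.mk I 1))
  exact one_ne_zero ((map_one _).symm.trans h1)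

theorem quotient_notMem_hochsterToLoc {U : Set (PrimeSpectrum R)} {q : PrimeSpectrum R}
    (hq : q ∉ U) {I : Ideal R} (hI : I ≤ q.asIdeal) :
    smod R (.of R (R ⧸ I)) ∉ hochsterToLoc R U := by
  have hloc : IsLocalizingSub.{u} {X : DerivedCategory (ModuleCat.{u} R) |
      (localObjects (q.asIdeal : Set R)ᶜ).leftOrthogonal X} := isLocalizingSub_setOf _
  have hU : hochsterToLoc R U ⊆ _ := hloc.loc_subset (by
    rintro _ ⟨l, hl, rfl⟩
    have hlq : ¬ Ideal.span {r | r ∈ l} ≤ q.asIdeal := fun h ↦ hq (hl h)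
    obtain ⟨r, hr, hrq⟩ := SetLike.not_le_iff_exists.1 hlq
    exact hloc.koszulD_mem_of_quotient_mem le_rfl
      (leftOrthogonal_localObjects hrq (smul_id_smod_quotient_eq_zero hr)))
  intro h
  obtain ⟨f, hf⟩ := exists_smod_quotient_hom_residueField_ne_zero hI
  exact hf (hU h f (localObjects_smod_residueField q.asIdeal))

end ResidueFieldObject

section Bijection

theorem exists_list_span_eq {A : Type*} [Semiring A] {I : Ideal A} (hI : I.FG) :
    ∃ l : List A, Ideal.span {r | r ∈ l} = I := by
  obtain ⟨s, rfl⟩ := hI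
  exact ⟨s.toList, by simp⟩

variable {R : Type u} [CommRing R] [HasDerivedCategory.{w'} (ModuleCat.{u} R)]
  {L L' : Set (DerivedCategory (ModuleCat.{u} R))} {U U' : Set (PrimeSpectrum R)}

theorem mem_locToHochster_iff {q : PrimeSpectrum R} :
    q ∈ locToHochster R L ↔ q.asIdeal ∈ gabrielFilter L := by
  rw [locToHochster, Set.mem_iUnion₂]
  exact ⟨fun ⟨I, ⟨hfg, hI⟩, hq⟩ ↦ ⟨I, hq, hfg, hI⟩, fun ⟨I, hq, hfg, hI⟩ ↦ ⟨I, ⟨hfg, hI⟩, hq⟩⟩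

theorem isHochsterOpen_locToHochster (L : Set (DerivedCategory (ModuleCat.{u} R))) :
    IsHochsterOpen R (locToHochster R L) :=
  ⟨_, fun _ hI ↦ hI.1, rfl⟩

theorem isCGLoc_hochsterToLoc (U : Set (PrimeSpectrum R)) : IsCGLoc R (hochsterToLoc R U) :=
  ⟨_, by rintro _ ⟨l, -, rfl⟩; exact isCompactObj_koszulD l, rfl⟩

theorem locToHochster_mono (h : L ⊆ L') : locToHochster R L ⊆ locToHochster R L' :=
  Set.biUnion_subset_biUnion_left fun _ hI ↦ ⟨hI.1, h hI.2⟩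

theorem hochsterToLoc_mono (h : U ⊆ U') : hochsterToLoc R U ⊆ hochsterToLoc R U' :=
  (isLocalizingSub_loc _).loc_subset fun _ ⟨l, hl, hx⟩ ↦ subset_loc _ ⟨l, hl.trans h, hx⟩

theorem mem_hochsterToLoc_of_smul_id_eq_zero {I : Ideal R} (hI : I.FG)
    (hIU : PrimeSpectrum.zeroLocus (I : Set R) ⊆ U) {X : DerivedCategory (ModuleCat.{u} R)}
    (hX : ∀ r ∈ I, r • 𝟙 X = 0) : X ∈ hochsterToLoc R U := by
  obtain ⟨l, rfl⟩ := exists_list_span_eq hI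
  have hl : koszulD R l ∈ hochsterToLoc R U := subset_loc _ ⟨l, hIU, rfl⟩
  exact (isLocalizingSub_loc _).mem_of_koszulD_mem hl
    fun r hr ↦ ⟨1, by rw [pow_one, hX r (Ideal.subset_span hr)]⟩

theorem IsLocalizingSub.quotient_mem_of_zeroLocus_subset (hL : IsLocalizingSub.{u} L) {I : Ideal R}
    (hI : PrimeSpectrum.zeroLocus (I : Set R) ⊆ locToHochster R L) :
    smod R (.of R (R ⧸ I)) ∈ L := by
  refine hL.quotient_mem_of_mem_gabrielFilter ?_
  by_contra hIL
  obtain ⟨p, hIp, hp, hmax⟩ := hL.exists_isPrime_notMem_gabrielFilter hIL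
  exact hmax.prop (mem_locToHochster_iff.1 (hI (show ⟨p, hp⟩ ∈ PrimeSpectrum.zeroLocus _ from hIp)))

theorem IsLocalizingSub.hochsterToLoc_locToHochster_subset (hL : IsLocalizingSub.{u} L) :
    hochsterToLoc R (locToHochster R L) ⊆ L := by
  refine hL.loc_subset ?_
  rintro _ ⟨l, hl, rfl⟩
  exact hL.koszulD_mem_of_quotient_mem le_rfl (hL.quotient_mem_of_zeroLocus_subset hl)

theorem IsLocalizingSub.mem_hochsterToLoc_locToHochster_of_isCompactObj
    (hL : IsLocalizingSub.{u} L) {c : DerivedCategory (ModuleCat.{u} R)}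
    (hc : IsCompactObj.{u} c) (hcL : c ∈ L) : c ∈ hochsterToLoc R (locToHochster R L) := by
  obtain ⟨Y, hY, ⟨hcY⟩⟩ := hc.exists_retract_finiteFree
  obtain ⟨Z, ⟨K, hK, ⟨e⟩⟩, ⟨hcZ⟩, hZ⟩ := exists_retract_mem_of_retract hcY hY
  have hKL : DerivedCategory.Q.obj K ∈ L := hL.mem_of_iso e.symm (hZ hL.toObjectProperty hcL)
  obtain ⟨J, hJ, hJfg, hJL⟩ := hK.torsionOf_id_mem_gabrielFilter hL hKL
  have hK' : DerivedCategory.Q.obj K ∈ hochsterToLoc R (locToHochster R L) :=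
    mem_hochsterToLoc_of_smul_id_eq_zero hJfg
      (fun q hq ↦ mem_locToHochster_iff.2 ⟨J, hq, hJfg, hJL⟩) fun r hr ↦ hJ hr
  exact (isLocalizingSub_loc _).toObjectProperty.prop_of_retract (hcZ.trans (.ofIso e.symm)) hK'

theorem IsCGLoc.hochsterToLoc_locToHochster (hL : IsCGLoc R L) :
    hochsterToLoc R (locToHochster R L) = L := by
  obtain ⟨S, hS, rfl⟩ := hL
  have hL := isLocalizingSub_loc.{u} S
  exact hL.hochsterToLoc_locToHochster_subset.antisymm ((isLocalizingSub_loc _).loc_subset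
    fun c hc ↦ hL.mem_hochsterToLoc_locToHochster_of_isCompactObj (hS c hc) (subset_loc S hc))

theorem IsHochsterOpen.locToHochster_hochsterToLoc (hU : IsHochsterOpen R U) :
    locToHochster R (hochsterToLoc R U) = U := by
  refine Set.Subset.antisymm (fun q hq ↦ ?_) ?_
  · obtain ⟨I, hIq, -, hI⟩ := mem_locToHochster_iff.1 hq
    by_contra hqU
    exact quotient_notMem_hochsterToLoc hqU hIq hI
  · obtain ⟨𝒮, h𝒮, rfl⟩ := hU
    have hsub (I : Ideal R) (hI : I ∈ 𝒮) : PrimeSpectrum.zeroLocus (I : Set R) ⊆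
        ⋃ I ∈ 𝒮, PrimeSpectrum.zeroLocus (I : Set R) :=
      Set.subset_biUnion_of_mem (u := fun I : Ideal R ↦ PrimeSpectrum.zeroLocus (I : Set R)) hI
    exact Set.biUnion_mono (fun I hI ↦ ⟨h𝒮 I hI, mem_hochsterToLoc_of_smul_id_eq_zero (h𝒮 I hI)
      (hsub I hI) fun _ ↦ smul_id_smod_quotient_eq_zero⟩) fun _ _ ↦ le_rfl

end Bijection

section Statement0

variable (R : Type u) [CommRing R] [HasDerivedCategory.{w'} (ModuleCat.{u} R)]

/-- Theorem (affine Hopkins–Neeman–Thomason): the assignments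
`L ↦ ⋃ {V(I) : I f.g., R/I ∈ L}` and `U ↦ Loc{K(I) : I f.g., V(I) ⊆ U}` are
mutually inverse, inclusion-preserving bijections between the compactly
generated localizing subcategories of `D(R)` and the Hochster open subsets of
`Spec R`. -/
theorem cgLoc_hochster_bijection :
    (∀ L, IsCGLoc R L → IsHochsterOpen R (locToHochster R L)) ∧
    (∀ U, IsHochsterOpen R U → IsCGLoc R (hochsterToLoc R U)) ∧
    (∀ L, IsCGLoc R L → hochsterToLoc R (locToHochster R L) = L) ∧
    (∀ U, IsHochsterOpen R U → locToHochster R (hochsterToLoc R U) = U) ∧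
    (∀ L L', IsCGLoc R L → IsCGLoc R L' →
      (L ⊆ L' ↔ locToHochster R L ⊆ locToHochster R L')) ∧
    (∀ U U', IsHochsterOpen R U → IsHochsterOpen R U' →
      (U ⊆ U' ↔ hochsterToLoc R U ⊆ hochsterToLoc R U')) := by
  refine ⟨fun L _ ↦ isHochsterOpen_locToHochster L, fun U _ ↦ isCGLoc_hochsterToLoc U,
    fun L hL ↦ hL.hochsterToLoc_locToHochster, fun U hU ↦ hU.locToHochster_hochsterToLoc,
    fun L L' hL hL' ↦ ⟨locToHochster_mono, fun h ↦ ?_⟩,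
    fun U U' hU hU' ↦ ⟨hochsterToLoc_mono, fun h ↦ ?_⟩⟩
  · rw [← hL.hochsterToLoc_locToHochster, ← hL'.hochsterToLoc_locToHochster]
    exact hochsterToLoc_mono h
  · rw [← hU.locToHochster_hochsterToLoc, ← hU'.locToHochster_hochsterToLoc]
    exact locToHochster_mono h

end Statement0
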